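/- arXiv:1711.03281 — 3 statements merged into one kernel-verified Lean document; each statement's English description precedes it below -/
import Mathlib

section
/- The reciprocal of the exponential transform is positive semidefinite on the exterior of Ω: for any finite collection of points z_1, …, z_n ∈ ℂ \ closure(Ω) and complex numbers c_1, …, c_n, the sum Σ_{j,k=1}^n c_j · conj(c_k) · exp(−C_Ω(z_j, z_k)) = Σ_{j,k=1}^n c_j · conj(c_k) / E_Ω(z_j, z_k) is a nonnegative real number. -/
open Complex MeasureTheory Filter Topology Bornology

/-- The double Cauchy transform `C_Ω(z,w) = −(1/π) ∫_Ω dA(ζ)/((ζ−z)(conj ζ − conj w))`. -/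
noncomputable def doubleCauchy (Ω : Set ℂ) (z w : ℂ) : ℂ :=
  -(1 / (Real.pi : ℂ)) *
    ∫ ζ in Ω, ((ζ - z) * ((starRingEnd ℂ) ζ - (starRingEnd ℂ) w))⁻¹

/-!
`-C_Ω(z, w)` is `π⁻¹` times the `L²(Ω)` inner product of the Cauchy kernels `(ζ - z)⁻¹` and
`(ζ - w)⁻¹`, which are bounded on `Ω` when `z` and `w` are exterior points. Hence the matrix
`(-C_Ω(z_j, z_k))` is a multiple of a Gram matrix. By the Schur product theorem all its entrywise
powers are positive semidefinite, and so is its entrywise exponential, a limit of nonnegative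
combinations of these powers.
-/

section Schur

open scoped ComplexOrder

variable {ι : Type*}

lemma isClosed_setOf_posSemidef {R : Type*} [Ring R] [PartialOrder R] [StarRing R]
    [TopologicalSpace R] [IsTopologicalRing R] [ContinuousStar R] [OrderClosedTopology R] :
    IsClosed {M : Matrix ι ι R | M.PosSemidef} := by
  simp only [Matrix.PosSemidef, Set.ofPred_and, Set.ofPred_forall]
  refine (isClosed_eq continuous_id.matrix_conjTranspose continuous_id).inter ?_
  exact isClosed_iInter fun x => isClosed_le continuous_const <|
    continuous_finsetSum _ fun i _ => continuous_finsetSum _ fun j _ =>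
      (continuous_const.mul (continuous_id.matrix_elem i j)).mul continuous_const

lemma posSemidef_const_one {R : Type*} [Ring R] [PartialOrder R] [StarRing R]
    [StarOrderedRing R] : (Matrix.of fun _ _ : ι => (1 : R)).PosSemidef := by
  refine ⟨by ext; simp, fun x => ?_⟩
  have hfactor : (x.sum fun i xi => x.sum fun j xj => star xi * Matrix.of (fun _ _ => 1) i j * xj) =
      star (x.sum fun _ xi => xi) * x.sum fun _ xi => xi := by
    simp [Finsupp.sum, Finset.sum_mul_sum]
  exact hfactor ▸ star_mul_self_nonneg _

variable {𝕜 : Type*} [RCLike 𝕜] {M : Matrix ι ι 𝕜}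

lemma posSemidef_map_pow (hM : M.PosSemidef) (m : ℕ) : (M.map (· ^ m)).PosSemidef := by
  induction m with
  | zero => simpa [Matrix.map] using posSemidef_const_one (ι := ι) (R := 𝕜)
  | succ m ih => simpa [Matrix.map, Matrix.hadamard, pow_succ] using ih.hadamard hM

lemma posSemidef_map_of_hasSum (hM : M.PosSemidef) {a : ℕ → 𝕜} (ha : ∀ m, 0 ≤ a m) {f : 𝕜 → 𝕜}
    (hf : ∀ i j, HasSum (fun m => a m * M i j ^ m) (f (M i j))) : (M.map f).PosSemidef := by
  have hsum : HasSum (fun m => a m • M.map (· ^ m)) (M.map f) :=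
    Pi.hasSum.2 fun i => Pi.hasSum.2 fun j => hf i j
  exact isClosed_setOf_posSemidef.mem_of_tendsto hsum <| Eventually.of_forall fun s =>
    Matrix.posSemidef_sum s fun m _ => (posSemidef_map_pow hM m).smul (ha m)

lemma posSemidef_map_exp (hM : M.PosSemidef) : (M.map NormedSpace.exp).PosSemidef := by
  refine posSemidef_map_of_hasSum hM (a := fun m => (m.factorial : 𝕜)⁻¹)
    (fun m => by positivity) fun i j => ?_
  simpa only [div_eq_inv_mul] using NormedSpace.expSeries_div_hasSum_exp (M i j)

lemma sum_mul_star_mul_nonneg [Fintype ι] {R : Type*} [CommRing R] [PartialOrder R] [StarRing R]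
    {A : Matrix ι ι R} (hA : A.PosSemidef) (c : ι → R) :
    0 ≤ ∑ i, ∑ j, c i * star (c j) * A i j := by
  simpa [dotProduct, Matrix.mulVec, Finset.mul_sum, mul_assoc, mul_comm, mul_left_comm]
    using hA.dotProduct_mulVec_nonneg (star c)

end Schur

section CauchyKernel

open scoped ComplexOrder InnerProductSpace

lemma posSemidef_integral_inner {ι α 𝕜 E : Type*} [Finite ι] [RCLike 𝕜] [NormedAddCommGroup E]
    [InnerProductSpace 𝕜 E] [MeasurableSpace α] {μ : Measure α} {f : ι → α → E}
    (hf : ∀ i, MemLp (f i) 2 μ) :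
    (Matrix.of fun i j => ∫ x, ⟪f i x, f j x⟫_𝕜 ∂μ).PosSemidef := by
  convert Matrix.posSemidef_gram 𝕜 fun i => (hf i).toLp using 1
  ext i j
  rw [Matrix.of_apply, Matrix.gram_apply, L2.inner_def]
  refine integral_congr_ae ?_
  filter_upwards [(hf i).coeFn_toLp, (hf j).coeFn_toLp] with x hi hj
  rw [hi, hj]

lemma memLp_inv_sub_of_notMem_support {K : Type*} [NormedField K] [SecondCountableTopology K]
    [MeasurableSpace K] [BorelSpace K] {μ : Measure K} [IsFiniteMeasure μ] {z : K}
    (hz : z ∉ μ.support) (p : ENNReal) : MemLp (fun ζ => (ζ - z)⁻¹) p μ := by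
  obtain ⟨U, hU, hμU⟩ := Measure.notMem_support_iff_exists.1 hz
  obtain ⟨ε, hε, hεU⟩ := Metric.mem_nhds_iff.1 hU
  refine .of_bound (by fun_prop) ε⁻¹ ?_
  filter_upwards [measure_eq_zero_iff_ae_notMem.1 (measure_mono_null hεU hμU)] with ζ hζ
  rw [Metric.mem_ball, dist_eq_norm, not_lt] at hζ
  rw [norm_inv]
  gcongr

lemma neg_doubleCauchy_eq_smul_integral_inner (Ω : Set ℂ) (z w : ℂ) :
    -doubleCauchy Ω z w = Real.pi⁻¹ • ∫ ζ in Ω, ⟪(ζ - w)⁻¹, (ζ - z)⁻¹⟫_ℂ := by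
  simp [doubleCauchy, mul_comm]

lemma posSemidef_neg_doubleCauchy {Ω : Set ℂ} (hΩ : volume Ω ≠ ⊤) {ι : Type*} [Finite ι]
    {z : ι → ℂ} (hz : ∀ j, z j ∉ closure Ω) :
    (Matrix.of fun j k => -doubleCauchy Ω (z j) (z k)).PosSemidef := by
  have : IsFiniteMeasure (volume.restrict Ω) := isFiniteMeasure_restrict.2 hΩ
  have hkernel (j : ι) : MemLp (fun ζ => (ζ - z j)⁻¹) 2 (volume.restrict Ω) :=
    memLp_inv_sub_of_notMem_support (fun h => hz j (Measure.support_restrict_subset h).1) 2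
  simp only [neg_doubleCauchy_eq_smul_integral_inner]
  exact (posSemidef_integral_inner (𝕜 := ℂ) hkernel).transpose.smul (inv_nonneg.2 Real.pi_nonneg)

end CauchyKernel

open scoped ComplexOrder in
theorem inv_expTransform_posSemidef_exterior_general {Ω : Set ℂ} (hΩ : volume Ω ≠ ⊤)
    {ι : Type*} [Finite ι] {z : ι → ℂ} (hz : ∀ j, z j ∉ closure Ω) :
    (Matrix.of fun j k => exp (-doubleCauchy Ω (z j) (z k))).PosSemidef := by
  rw [exp_eq_exp_ℂ]
  exact posSemidef_map_exp (posSemidef_neg_doubleCauchy hΩ hz)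

/-- The reciprocal `1/E_Ω = exp(−C_Ω)` of the exponential transform is
positive semidefinite on the exterior of `Ω`. -/
theorem inv_expTransform_posSemidef_exterior
    (Ω : Set ℂ) (hΩopen : IsOpen Ω) (hΩbdd : Bornology.IsBounded Ω)
    (hΩconn : IsConnected Ω) (hΩsc : SimplyConnectedSpace Ω)
    (γ : ℝ → ℂ) (hγan : ∀ t, AnalyticAt ℝ γ t)
    (hγper : Function.Periodic γ (2 * Real.pi))
    (hγ' : ∀ t, deriv γ t ≠ 0)
    (hΓ : frontier Ω = Set.range γ)
    (n : ℕ) (z : Fin n → ℂ) (hz : ∀ j, z j ∉ closure Ω) (c : Fin n → ℂ) :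
    0 ≤ (∑ j : Fin n, ∑ k : Fin n,
        c j * (starRingEnd ℂ) (c k) * Complex.exp (-(doubleCauchy Ω (z j) (z k)))).re ∧
    (∑ j : Fin n, ∑ k : Fin n,
        c j * (starRingEnd ℂ) (c k) * Complex.exp (-(doubleCauchy Ω (z j) (z k)))).im = 0 := by
  open scoped ComplexOrder in
  have hsum := sum_mul_star_mul_nonneg
    (inv_expTransform_posSemidef_exterior_general hΩbdd.measure_lt_top.ne hz) c
  exact (nonneg_iff.1 hsum).imp_right Eq.symm
end

section
/- Let S be the Schwarz function of Γ, holomorphic on an open neighborhood U of Γ, and fix w ∈ ℂ \ closure(Ω). Then there exist an open neighborhood V ⊆ U of Γ and holomorphic functions f₁ on Ω ∪ V and f₂ on (ℂ \ closure(Ω)) ∪ V such that: (i) f₁(z)·(S(z) − conj(w)) = f₂(z) for all z ∈ V; (ii) f₂(z) → 1 as z → ∞; (iii) f₂(z) = E_Ω(z,w) for all z ∈ ℂ \ closure(Ω) and f₁(z) = E_Ω(z,w)/(conj(z) − conj(w)) for all z ∈ Ω. Moreover, properties (i) and (ii) determine the pair uniquely: any pair (g₁, g₂), holomorphic on Ω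 ∪ V' and (ℂ \ closure(Ω)) ∪ V' for some open neighborhood V' ⊆ U of Γ and satisfying (i) and (ii), agrees with (f₁, f₂) on Ω and on ℂ \ closure(Ω) respectively. -/
open Complex MeasureTheory Filter Topology Bornology

/-- The exponential transform `E_Ω(z,w) = exp (C_Ω(z,w))`. -/
noncomputable def expTransform (Ω : Set ℂ) (z w : ℂ) : ℂ :=
  Complex.exp (doubleCauchy Ω z w)

/-!
Write `E` for the exponential transform of `Ω` with pole `w`. It is multiplicative in the domain,
and integration over concentric circles evaluates it on a disc about `c` as
`(conj z - conj w) / (conj c - conj w)`; splitting a disc off `Ω` therefore shows that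
`E / (conj z - conj w)` is holomorphic in `Ω`. As `S = conj` on `frontier Ω`, the functions
`E / (conj z - conj w) * (S z - conj w)` inside `Ω` and `E` outside fit together continuously.
The glued function is holomorphic off the set where `S z = conj z`, and this set is removable
because `z + S z` or `I * (z - S z)` is a local coordinate that maps it into the real line.
Finally, the ratio of two sections with value one at infinity is entire, hence constant.
-/

section RealLineRemovable

open Set

variable {E : Type*} [NormedAddCommGroup E] [NormedSpace ℂ E] {f : ℂ → E}

theorem wedgeIntegral_add_eq_zero_of_differentiableAt_off_real {z w : ℂ}
    (hc : ContinuousOn f (Rectangle z w))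
    (hd : ∀ x ∈ Rectangle z w, x.im ≠ 0 → DifferentiableAt ℂ f x)
    (h0 : (0 : ℝ) ∉ Ioo (min z.im w.im) (max z.im w.im)) :
    wedgeIntegral z w f + wedgeIntegral w z f = 0 := by
  rw [wedgeIntegral_add_wedgeIntegral_eq]
  refine integral_boundary_rect_eq_zero_of_continuousOn_of_differentiableOn f z w hc fun x hx ↦
    (hd x (reProdIm_subset_iff.2 (prod_mono Ioo_subset_Icc_self Ioo_subset_Icc_self) hx)
      fun h ↦ h0 ?_).differentiableWithinAt
  simpa only [mem_preimage, h] using hx.2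

theorem wedgeIntegral_add_eq_add_of_mem_uIcc {z w : ℂ} {t : ℝ}
    (hc : ContinuousOn f (Rectangle z w)) (ht : t ∈ uIcc z.im w.im) :
    wedgeIntegral z w f + wedgeIntegral w z f =
      (wedgeIntegral z (w.re + t * I) f + wedgeIntegral (w.re + t * I) z f) +
        (wedgeIntegral (z.re + t * I) w f + wedgeIntegral w (z.re + t * I) f) := by
  have vertical_integrable {x : ℝ} (hx : x ∈ uIcc z.re w.re) {c d : ℝ}
      (hcd : uIcc c d ⊆ uIcc z.im w.im) :
      IntervalIntegrable (fun y : ℝ ↦ f (x + y * I)) volume c d :=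
    (hc.comp (by fun_prop) fun y hy ↦
      mem_reProdIm.2 (by simpa using ⟨hx, hcd hy⟩)).intervalIntegrable
  have below := uIcc_subset_uIcc_left ht
  have above := uIcc_subset_uIcc_right ht
  have left := intervalIntegral.integral_add_adjacent_intervals
    (vertical_integrable left_mem_uIcc below) (vertical_integrable left_mem_uIcc above)
  have right := intervalIntegral.integral_add_adjacent_intervals
    (vertical_integrable right_mem_uIcc below) (vertical_integrable right_mem_uIcc above)
  simp only [wedgeIntegral_add_wedgeIntegral_eq, ← left, ← right, smul_add, add_re, add_im,
    ofReal_re, ofReal_im, re_ofReal_mul, im_ofReal_mul, I_re, I_im, mul_zero, mul_one, add_zero,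
    zero_add]
  abel

theorem isConservativeOn_of_differentiableAt_off_real {U : Set ℂ} (hc : ContinuousOn f U)
    (hd : ∀ z ∈ U, z.im ≠ 0 → DifferentiableAt ℂ f z) : IsConservativeOn f U := by
  intro z w hzw
  rw [← add_eq_zero_iff_eq_neg]
  by_cases h0 : (0 : ℝ) ∈ uIcc z.im w.im
  · have below : Rectangle z (w.re + (0 : ℝ) * I) ⊆ Rectangle z w := by
      simpa [Rectangle] using
        reProdIm_subset_iff.2 (prod_mono Subset.rfl (uIcc_subset_uIcc_left h0))
    have above : Rectangle (z.re + (0 : ℝ) * I) w ⊆ Rectangle z w := by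
      simpa [Rectangle] using
        reProdIm_subset_iff.2 (prod_mono Subset.rfl (uIcc_subset_uIcc_right h0))
    rw [wedgeIntegral_add_eq_add_of_mem_uIcc (hc.mono hzw) h0,
      wedgeIntegral_add_eq_zero_of_differentiableAt_off_real (hc.mono (below.trans hzw))
        (fun x hx ↦ hd x (hzw (below hx))) (by simpa using le_of_lt),
      wedgeIntegral_add_eq_zero_of_differentiableAt_off_real (hc.mono (above.trans hzw))
        (fun x hx ↦ hd x (hzw (above hx))) (by simpa using le_of_lt), add_zero]
  · exact wedgeIntegral_add_eq_zero_of_differentiableAt_off_real (hc.mono hzw)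
      (fun x hx ↦ hd x (hzw hx)) fun h ↦ h0 (Ioo_subset_Icc_self h)

variable [CompleteSpace E]

theorem differentiableOn_of_differentiableAt_off_real {U : Set ℂ} (hU : IsOpen U)
    (hc : ContinuousOn f U) (hd : ∀ z ∈ U, z.im ≠ 0 → DifferentiableAt ℂ f z) :
    DifferentiableOn ℂ f U :=
  (isConservativeOn_and_continuousOn_iff_isDifferentiableOn hU).1
    ⟨isConservativeOn_of_differentiableAt_off_real hc hd, hc⟩

theorem differentiableAt_of_differentiableAt_off_real {ψ : ℂ → ℂ} {p : ℂ}
    (hψ : AnalyticAt ℂ ψ p) (hψ' : deriv ψ p ≠ 0) (hc : ∀ᶠ z in 𝓝 p, ContinuousAt f z)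
    (hd : ∀ᶠ z in 𝓝 p, (ψ z).im ≠ 0 → DifferentiableAt ℂ f z) : DifferentiableAt ℂ f p := by
  have hstrict := hψ.hasStrictDerivAt
  obtain ⟨φ, hφ⟩ : ∃ φ, φ = hstrict.localInverse ψ _ p hψ' := ⟨_, rfl⟩
  have left_inv : ∀ᶠ z in 𝓝 p, φ (ψ z) = z := hφ ▸ hstrict.eventually_left_inverse hψ'
  have right_inv : ∀ᶠ y in 𝓝 (ψ p), ψ (φ y) = y := hφ ▸ hstrict.eventually_right_inverse hψ'
  have hφan : AnalyticAt ℂ φ (ψ p) := hφ ▸ hψ.analyticAt_localInverse hψ'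
  have hφtendsto : Tendsto φ (𝓝 (ψ p)) (𝓝 p) := by
    simpa only [left_inv.self_of_nhds] using hφan.continuousAt.tendsto
  obtain ⟨r, hr, hball⟩ := Metric.eventually_nhds_iff_ball.1
    ((hφtendsto.eventually (hc.and hd)).and (right_inv.and
      (hφan.eventually_analyticAt.mono fun _ h ↦ h.differentiableAt)))
  have hcomp : DifferentiableOn ℂ (f ∘ φ) (Metric.ball (ψ p) r) := by
    refine differentiableOn_of_differentiableAt_off_real Metric.isOpen_ball
      (fun y hy ↦ ?_) fun y hy him ↦ ?_
    · obtain ⟨⟨hcont, -⟩, -, hφy⟩ := hball y hy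
      exact (hcont.comp hφy.continuousAt).continuousWithinAt
    · obtain ⟨⟨-, hdiff⟩, hψφ, hφy⟩ := hball y hy
      exact (hdiff (by rwa [hψφ])).comp y hφy
  have hat := hcomp.differentiableAt (Metric.ball_mem_nhds _ hr)
  refine (hat.comp p hψ.differentiableAt).congr_of_eventuallyEq ?_
  filter_upwards [left_inv] with z hz
  simp only [Function.comp_apply, hz]

-- `z + S z` and `I * (z - S z)` are real where `S z = conj z`, and at each point one of their
-- derivatives is nonzero.
theorem differentiableOn_of_differentiableAt_off_schwarz {S : ℂ → ℂ} {V : Set ℂ} (hV : IsOpen V)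
    (hS : DifferentiableOn ℂ S V) (hc : ContinuousOn f V)
    (hd : ∀ z ∈ V, S z ≠ (starRingEnd ℂ) z → DifferentiableAt ℂ f z) :
    DifferentiableOn ℂ f V := by
  intro p hp
  have hSan : AnalyticAt ℂ S p := hS.analyticAt (hV.mem_nhds hp)
  have hS' : HasDerivAt S (deriv S p) p := hSan.differentiableAt.hasDerivAt
  have hcont : ∀ᶠ z in 𝓝 p, ContinuousAt f z := by
    filter_upwards [hV.mem_nhds hp] with z hz using hc.continuousAt (hV.mem_nhds hz)
  have hdiff {ψ : ℂ → ℂ} (hreal : ∀ z, S z = (starRingEnd ℂ) z → (ψ z).im = 0) :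
      ∀ᶠ z in 𝓝 p, (ψ z).im ≠ 0 → DifferentiableAt ℂ f z := by
    filter_upwards [hV.mem_nhds hp] with z hz him using hd z hz fun h ↦ him (hreal z h)
  refine DifferentiableAt.differentiableWithinAt ?_
  by_cases h : deriv S p = -1
  · refine differentiableAt_of_differentiableAt_off_real (ψ := fun z ↦ I * (z - S z))
      (by fun_prop) ?_ hcont (hdiff fun z hz ↦ by simp [hz])
    have hderiv : deriv (fun z ↦ I * (z - S z)) p = I * (1 - deriv S p) :=
      (((hasDerivAt_id p).sub hS').const_mul I).deriv
    simp [hderiv, h]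
  · refine differentiableAt_of_differentiableAt_off_real (ψ := fun z ↦ z + S z)
      (by fun_prop) ?_ hcont (hdiff fun z hz ↦ by simp [hz])
    have hderiv : deriv (fun z ↦ z + S z) p = 1 + deriv S p :=
      ((hasDerivAt_id p).add hS').deriv
    exact fun h' ↦ h (by linear_combination hderiv.symm.trans h')

end RealLineRemovable

section CauchyTransform

/-- The Cauchy transform `z ↦ ∫_A h(ζ) / (ζ - z) dA(ζ)` of the density `h` on `A`, without the
factor `-1 / π` that normalizes `∂/∂z̄`. -/
noncomputable def cauchyTransform (A : Set ℂ) (h : ℂ → ℂ) (z : ℂ) : ℂ :=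
  ∫ ζ in A, (ζ - z)⁻¹ * h ζ

variable {A B : Set ℂ} {h : ℂ → ℂ} {z : ℂ}

theorem locallyIntegrable_inv : LocallyIntegrable fun ζ : ℂ ↦ ζ⁻¹ := by
  refine locallyIntegrable_of_norm_le_rpow (C := 1) (α := 1) (by simp) (by simp)
    (.of_forall fun ζ ↦ ?_) measurable_inv.aestronglyMeasurable
  rw [norm_inv, Real.rpow_neg_one, one_mul]

theorem integrableOn_inv_sub (hA : IsBounded A) (z : ℂ) :
    IntegrableOn (fun ζ ↦ (ζ - z)⁻¹) A := by
  obtain ⟨R, hR⟩ := hA.subset_closedBall z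
  refine IntegrableOn.mono_set ?_ hR
  have hball : (· - z) ⁻¹' Metric.closedBall 0 R = Metric.closedBall z R := by
    ext ζ
    simp [dist_eq_norm]
  rw [← hball]
  exact ((measurePreserving_sub_right volume z).integrableOn_comp_preimage
    (measurableEmbedding_subRight z)).2
    (locallyIntegrable_inv.integrableOn_isCompact (isCompact_closedBall 0 R))

theorem integrableOn_inv_sub_mul (hA : IsBounded A) (hh : MemLp h ⊤ (volume.restrict A)) (z : ℂ) :
    IntegrableOn (fun ζ ↦ (ζ - z)⁻¹ * h ζ) A :=
  (integrableOn_inv_sub hA z).mul_of_top_left hh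

theorem cauchyTransform_union (hAB : Disjoint A B) (hB : MeasurableSet B)
    (hA_bdd : IsBounded A) (hB_bdd : IsBounded B) (hhA : MemLp h ⊤ (volume.restrict A))
    (hhB : MemLp h ⊤ (volume.restrict B)) (z : ℂ) :
    cauchyTransform (A ∪ B) h z = cauchyTransform A h z + cauchyTransform B h z :=
  setIntegral_union hAB hB (integrableOn_inv_sub_mul hA_bdd hhA z)
    (integrableOn_inv_sub_mul hB_bdd hhB z)

-- Translation acts continuously on `L¹`, and `L^∞` pairs continuously with it.
theorem continuous_integral_translate_mul {k : ℂ → ℂ} (hk : Integrable k) (hh : MemLp h ⊤) :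
    Continuous fun z ↦ ∫ ζ, k (ζ - z) * h ζ := by
  have hk1 : MemLp k 1 := memLp_one_iff_integrable.2 hk
  have : Fact ((1 : ENNReal) ≠ ⊤) := ⟨ENNReal.one_ne_top⟩
  have htranslate : Continuous fun z : ℂ ↦ DomAddAct.mk (-z) +ᵥ hk1.toLp k :=
    (DomAddAct.continuous_mk.comp continuous_neg).vadd continuous_const
  have hpair := (((ContinuousLinearMap.mul ℂ ℂ).lpPairing volume 1 ⊤).continuous.comp
    htranslate).clm_apply (continuous_const (y := hh.toLp h))
  refine hpair.congr fun z ↦ ?_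
  rw [Function.comp_apply, ContinuousLinearMap.lpPairing_eq_integral]
  refine integral_congr_ae ?_
  filter_upwards [DomAddAct.vadd_Lp_ae_eq (DomAddAct.mk (-z)) (hk1.toLp k),
    (measurePreserving_vadd (-z) volume).quasiMeasurePreserving.ae hk1.coeFn_toLp,
    hh.coeFn_toLp] with ζ hvadd hkζ hhζ
  rw [hvadd, hhζ, Equiv.symm_apply_apply, hkζ, ContinuousLinearMap.mul_apply', vadd_eq_add,
    neg_add_eq_sub]

theorem continuous_cauchyTransform (hA : MeasurableSet A) (hA_bdd : IsBounded A)
    (hh : MemLp h ⊤ (volume.restrict A)) : Continuous (cauchyTransform A h) := by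
  refine continuous_iff_continuousAt.2 fun z₀ ↦ ?_
  obtain ⟨R, hR⟩ := hA_bdd.subset_closedBall z₀
  have hk : Integrable ((Metric.closedBall (0 : ℂ) (R + 1)).indicator fun ζ ↦ ζ⁻¹) :=
    (locallyIntegrable_inv.integrableOn_isCompact (isCompact_closedBall _ _)).integrable_indicator
      measurableSet_closedBall
  refine (continuous_integral_translate_mul hk ((memLp_indicator_iff_restrict hA).2
    hh)).continuousAt.congr ?_
  filter_upwards [Metric.ball_mem_nhds z₀ one_pos] with z hz
  rw [cauchyTransform, ← integral_indicator hA]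
  congr 1 with ζ
  by_cases hζ : ζ ∈ A
  · have hmem : ζ - z ∈ Metric.closedBall 0 (R + 1) := by
      rw [mem_closedBall_zero_iff, ← dist_eq_norm]
      exact (dist_triangle_right ζ z z₀).trans (add_le_add (hR hζ) (Metric.mem_ball.1 hz).le)
    simp [hζ, hmem]
  · simp [hζ]

theorem differentiableAt_cauchyTransform (hA : MeasurableSet A) (hh : IntegrableOn h A)
    (hz : z ∉ closure A) : DifferentiableAt ℂ (cauchyTransform A h) z := by
  obtain ⟨δ, hδ, hball⟩ := Metric.mem_nhds_iff.1 (isClosed_closure.isOpen_compl.mem_nhds hz)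
  have hdist {ζ : ℂ} (hζ : ζ ∈ A) {x : ℂ} (hx : x ∈ Metric.ball z (δ / 2)) : δ / 2 ≤ ‖ζ - x‖ := by
    have hζz : δ ≤ dist ζ z := not_lt.1 fun hlt ↦ hball hlt (subset_closure hζ)
    rw [← dist_eq_norm]
    linarith [dist_triangle ζ x z, Metric.mem_ball.1 hx]
  have hmeas (x : ℂ) : AEStronglyMeasurable (fun ζ ↦ (ζ - x)⁻¹) (volume.restrict A) := by fun_prop
  refine (hasDerivAt_integral_of_dominated_loc_of_deriv_le (μ := volume.restrict A)
    (F := fun x ζ ↦ (ζ - x)⁻¹ * h ζ) (F' := fun x ζ ↦ ((ζ - x) ^ 2)⁻¹ * h ζ)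
    (bound := fun ζ ↦ ((δ / 2) ^ 2)⁻¹ * ‖h ζ‖) (Metric.ball_mem_nhds z (half_pos hδ))
    (.of_forall fun x ↦ (hmeas x).mul hh.aestronglyMeasurable) ?_ ?_ ?_ ?_
    ?_).2.differentiableAt
  · refine hh.bdd_mul (c := (δ / 2)⁻¹) (hmeas z) ?_
    filter_upwards [ae_restrict_mem hA] with ζ hζ
    rw [norm_inv]
    exact inv_anti₀ (half_pos hδ) (hdist hζ (Metric.mem_ball_self (half_pos hδ)))
  · exact AEStronglyMeasurable.mul (by fun_prop) hh.aestronglyMeasurable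
  · filter_upwards [ae_restrict_mem hA] with ζ hζ x hx
    rw [norm_mul, norm_inv, norm_pow]
    gcongr
    exact hdist hζ hx
  · exact hh.norm.const_mul _
  · filter_upwards [ae_restrict_mem hA] with ζ hζ x hx
    have hne : ζ - x ≠ 0 := norm_pos_iff.1 ((half_pos hδ).trans_le (hdist hζ hx))
    simpa [div_eq_mul_inv, Pi.inv_def] using
      (((hasDerivAt_id x).const_sub ζ).inv hne).mul_const (h ζ)

theorem tendsto_cauchyTransform_cobounded (hA : MeasurableSet A) (hA_bdd : IsBounded A)
    (hh : IntegrableOn h A) : Tendsto (cauchyTransform A h) (cobounded ℂ) (𝓝 0) := by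
  obtain ⟨R, hR⟩ := hA_bdd.exists_norm_le
  have : (cobounded ℂ).IsCountablyGenerated := by
    rw [← comap_norm_atTop]
    infer_instance
  have hpointwise (ζ : ℂ) : Tendsto (fun z ↦ (ζ - z)⁻¹ * h ζ) (cobounded ℂ) (𝓝 0) := by
    simpa using ((tendsto_inv₀_cobounded.comp
      (tendsto_const_sub_cobounded ζ)).mul_const (h ζ))
  have hbound : ∀ᶠ z in cobounded ℂ, ∀ᵐ ζ ∂volume.restrict A, ‖(ζ - z)⁻¹ * h ζ‖ ≤ ‖h ζ‖ := by
    filter_upwards [tendsto_norm_cobounded_atTop.eventually_ge_atTop (R + 1)] with z hz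
    filter_upwards [ae_restrict_mem hA] with ζ hζ
    have hfar : 1 ≤ ‖ζ - z‖ := by linarith [norm_sub_norm_le z ζ, norm_sub_rev z ζ, hR ζ hζ]
    rw [norm_mul, norm_inv]
    exact mul_le_of_le_one_left (norm_nonneg _) (inv_le_one_of_one_le₀ hfar)
  have hlim : Tendsto (cauchyTransform A h) (cobounded ℂ) (𝓝 (∫ _ in A, (0 : ℂ))) :=
    tendsto_integral_filter_of_dominated_convergence (fun ζ ↦ ‖h ζ‖)
      (.of_forall fun z ↦ AEStronglyMeasurable.mul (by fun_prop) hh.aestronglyMeasurable) hbound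
      hh.norm (.of_forall hpointwise)
  simpa only [integral_zero] using hlim

end CauchyTransform

section PolarCoordinates

variable {E : Type*} [NormedAddCommGroup E] [NormedSpace ℝ E] {f : ℂ → E}

theorem integrableOn_comp_polarCoord_symm_iff :
    IntegrableOn (fun p : ℝ × ℝ ↦ p.1 • f (Complex.polarCoord.symm p)) polarCoord.target ↔
      Integrable f := by
  rw [← volume_preserving_equiv_real_prod.symm.integrable_comp_emb
    measurableEquivRealProd.symm.measurableEmbedding, ← integrableOn_univ,
    ← integrableOn_congr_set_ae polarCoord_source_ae_eq_univ,
    ← polarCoord.symm_image_target_eq_source,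
    integrableOn_image_iff_integrableOn_abs_det_fderiv_smul volume
      polarCoord.open_target.measurableSet
      (fun p _ ↦ (hasFDerivAt_polarCoord_symm p).hasFDerivWithinAt) polarCoord.symm.injOn]
  refine integrableOn_congr_fun (fun p hp ↦ ?_) polarCoord.open_target.measurableSet
  simp only [det_fderivPolarCoordSymm, abs_of_pos (Set.mem_Ioi.1 hp.1), Function.comp_apply,
    measurableEquivRealProd_symm_polarCoord_symm_apply]

theorem integral_eq_integral_smul_circleAverage (hf : Integrable f) (c : ℂ) :
    ∫ ζ, f ζ =
      (2 * Real.pi) • ∫ ρ in Set.Ioi (0 : ℝ), ρ • Real.circleAverage f c ρ := by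
  have hpolar (p : ℝ × ℝ) : Complex.polarCoord.symm p + c = circleMap c p.1 p.2 := by
    rw [Complex.polarCoord_symm_apply, circleMap, exp_mul_I, ofReal_cos, ofReal_sin, add_comm]
  have htarget : polarCoord.target = Set.Ioi 0 ×ˢ Set.Ioo (-Real.pi) Real.pi := rfl
  have hint := integrableOn_comp_polarCoord_symm_iff.2 (hf.comp_add_right c)
  rw [htarget] at hint
  rw [← integral_add_right_eq_self f c, ← Complex.integral_comp_polarCoord_symm,
    htarget, Measure.volume_eq_prod, setIntegral_prod _ hint, ← integral_smul]
  refine integral_congr_ae (.of_forall fun ρ ↦ ?_)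
  have hperiod := ((periodic_circleMap c ρ).comp f).intervalIntegral_add_eq (-Real.pi) 0
  rw [neg_add_eq_sub, two_mul, add_sub_cancel_right, ← two_mul, zero_add] at hperiod
  simp only [hpolar, integral_smul, Real.circleAverage_def]
  rw [← integral_Ioc_eq_integral_Ioo,
    ← intervalIntegral.integral_of_le (neg_le_self Real.pi_pos.le), smul_comm, smul_inv_smul₀
    Real.two_pi_pos.ne']
  exact congrArg _ hperiod

end PolarCoordinates

section DiscIntegral

open Metric Real ComplexConjugate

variable {E : Type*} [NormedAddCommGroup E] [NormedSpace ℂ E] [CompleteSpace E]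
  {g G : ℂ → E} {c z : ℂ} {ρ r : ℝ}

theorem conj_sub_conj_eq_div {ζ : ℂ} (hζ : ζ ∈ sphere c ρ) (hζc : ζ - c ≠ 0) (z : ℂ) :
    conj ζ - conj z = (ρ ^ 2 - conj (z - c) * (ζ - c)) / (ζ - c) := by
  have hsq : conj (ζ - c) * (ζ - c) = (ρ : ℂ) ^ 2 := by
    rw [conj_mul', mem_sphere_iff_norm.1 hζ]
  rw [eq_div_iff hζc, ← hsq, map_sub, map_sub]
  ring

theorem circleAverage_conj_sub_inv_smul_of_norm_lt (hg : DiffContOnCl ℂ g (ball c ρ))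
    (hz : ‖z - c‖ < ρ) : circleAverage (fun ζ ↦ (conj ζ - conj z)⁻¹ • g ζ) c ρ = 0 := by
  have hρ : 0 < ρ := (norm_nonneg _).trans_lt hz
  have hne {ζ : ℂ} (hζ : ζ ∈ closedBall c ρ) : (ρ : ℂ) ^ 2 - conj (z - c) * (ζ - c) ≠ 0 := by
    refine sub_ne_zero.2 fun h ↦ ?_
    have hnorm : ρ ^ 2 = ‖z - c‖ * ‖ζ - c‖ := by
      have hnorm' := congrArg norm h
      rwa [norm_mul, RCLike.norm_conj, norm_pow, norm_real, norm_of_nonneg hρ.le] at hnorm'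
    nlinarith [mem_closedBall_iff_norm.1 hζ, norm_nonneg (z - c)]
  have hdiff : DiffContOnCl ℂ
      (fun ζ ↦ ((ρ ^ 2 - conj (z - c) * (ζ - c))⁻¹ * (ζ - c)) • g ζ) (ball c |ρ|) := by
    rw [abs_of_pos hρ]
    refine DiffContOnCl.smul (DifferentiableOn.diffContOnCl ?_) hg
    rw [closure_ball c hρ.ne']
    exact (DifferentiableOn.inv (by fun_prop) fun ζ hζ ↦ hne hζ).mul (by fun_prop)
  rw [← zero_smul ℂ (g c), ← mul_zero (_ : ℂ)⁻¹, ← sub_self c, ← hdiff.circleAverage]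
  refine circleAverage_congr_sphere fun ζ hζ ↦ ?_
  rw [abs_of_pos hρ] at hζ
  rw [conj_sub_conj_eq_div hζ (sub_ne_zero.2 (ne_of_mem_sphere hζ hρ.ne')), inv_div,
    div_eq_inv_mul]

theorem circleAverage_conj_sub_inv_smul_of_lt_norm (hg : DiffContOnCl ℂ g (ball c ρ))
    (hρ : 0 < ρ) (hz : ρ < ‖z - c‖) :
    circleAverage (fun ζ ↦ (conj ζ - conj z)⁻¹ • g ζ) c ρ =
      -(conj (z - c))⁻¹ • g (c + ρ ^ 2 / conj (z - c)) := by
  have hb : conj (z - c) ≠ 0 := (map_ne_zero _).2 (norm_pos_iff.1 (hρ.trans hz))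
  have hmem : c + ρ ^ 2 / conj (z - c) ∈ ball c |ρ| := by
    rw [abs_of_pos hρ, mem_ball_iff_norm, add_sub_cancel_left, norm_div, RCLike.norm_conj,
      norm_pow, norm_real, norm_of_nonneg hρ.le, div_lt_iff₀ (hρ.trans hz)]
    nlinarith
  rw [← abs_of_pos hρ] at hg
  rw [← hg.circleAverage_smul_div hmem,
    ← circleAverage_fun_smul]
  refine circleAverage_congr_sphere fun ζ hζ ↦ ?_
  rw [abs_of_pos hρ] at hζ
  have hζc : ζ - c ≠ 0 := sub_ne_zero.2 (ne_of_mem_sphere hζ hρ.ne')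
  have hfactor : (ρ : ℂ) ^ 2 - conj (z - c) * (ζ - c) =
      -conj (z - c) * (ζ - (c + ρ ^ 2 / conj (z - c))) := by
    field_simp
    ring
  simp only [conj_sub_conj_eq_div hζ hζc, hfactor, inv_div, smul_smul]
  congr 1
  rw [div_mul_eq_div_div, div_right_comm, div_neg, div_eq_inv_mul _ (conj _), neg_mul_eq_neg_mul,
    ← neg_mul_eq_neg_mul]

theorem add_sq_div_conj_mem_ball (hρ : ρ ∈ Set.Icc 0 ‖z - c‖) (hz : z ∈ ball c r) :
    c + (ρ : ℂ) ^ 2 / conj (z - c) ∈ ball c r := by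
  rw [mem_ball_iff_norm, add_sub_cancel_left, norm_div, RCLike.norm_conj, norm_pow, norm_real,
    norm_of_nonneg hρ.1]
  refine (div_le_of_le_mul₀ (norm_nonneg _) (norm_nonneg _) ?_).trans_lt (mem_ball_iff_norm.1 hz)
  nlinarith [hρ.1, hρ.2]

theorem intervalIntegral_smul_comp_sq_div_conj (hg : ContinuousOn g (ball c r))
    (hG : ∀ ζ ∈ ball c r, HasDerivAt G (g ζ) ζ) (hz : z ∈ ball c r) :
    ∫ ρ in (0 : ℝ)..‖z - c‖, (2 * ρ / conj (z - c)) • g (c + ρ ^ 2 / conj (z - c)) =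
      G z - G c := by
  have hmaps (ρ : ℝ) (hρ : ρ ∈ Set.uIcc 0 ‖z - c‖) : c + (ρ : ℂ) ^ 2 / conj (z - c) ∈ ball c r :=
    add_sq_div_conj_mem_ball (Set.uIcc_of_le (norm_nonneg (z - c)) ▸ hρ) hz
  have hderiv (ρ : ℝ) : HasDerivAt (fun ρ : ℝ ↦ c + (ρ : ℂ) ^ 2 / conj (z - c))
      (2 * ρ / conj (z - c)) ρ := by
    simpa using (((hasDerivAt_pow 2 (ρ : ℂ)).div_const (conj (z - c))).const_add c).comp_ofReal
  have hcont : ContinuousOn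
      (fun ρ : ℝ ↦ (2 * ρ / conj (z - c)) • g (c + ρ ^ 2 / conj (z - c)))
      (Set.uIcc 0 ‖z - c‖) :=
    ContinuousOn.smul (by fun_prop) (hg.comp (by fun_prop) hmaps)
  have hftc := intervalIntegral.integral_eq_sub_of_hasDerivAt
    (fun ρ hρ ↦ (hG _ (hmaps ρ hρ)).scomp ρ (hderiv ρ))
    hcont.intervalIntegrable
  have hend : c + (‖z - c‖ : ℂ) ^ 2 / conj (z - c) = z := by
    rw [← mul_conj', mul_div_cancel_of_imp (map_eq_zero _).1, add_sub_cancel]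
  simpa [hend, -map_sub] using hftc

theorem circleAverage_indicator_ball_conj_sub_inv_smul (hg : DifferentiableOn ℂ g (ball c r))
    (hz : z ∈ ball c r) (hρ : 0 < ρ) (hρz : ρ ≠ ‖z - c‖) :
    circleAverage ((ball c r).indicator fun ζ ↦ (conj ζ - conj z)⁻¹ • g ζ) c ρ =
      (Set.Ioc 0 ‖z - c‖).indicator
        (fun ρ : ℝ ↦ -(conj (z - c))⁻¹ • g (c + ρ ^ 2 / conj (z - c))) ρ := by
  rcases lt_or_ge ρ r with hρr | hrρ
  · have hgρ : DiffContOnCl ℂ g (ball c ρ) :=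
      hg.diffContOnCl_ball (closedBall_subset_ball hρr)
    have hcongr : circleAverage ((ball c r).indicator fun ζ ↦ (conj ζ - conj z)⁻¹ • g ζ) c ρ =
        circleAverage (fun ζ ↦ (conj ζ - conj z)⁻¹ • g ζ) c ρ :=
      circleAverage_congr_sphere fun ζ hζ ↦ Set.indicator_of_mem
        (sphere_subset_ball (by rwa [abs_of_pos hρ]) hζ) _
    rw [hcongr]
    rcases lt_or_gt_of_ne hρz with hlt | hgt
    · rw [circleAverage_conj_sub_inv_smul_of_lt_norm hgρ hρ hlt,
        Set.indicator_of_mem (Set.mem_Ioc.2 ⟨hρ, hlt.le⟩)]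
    · rw [circleAverage_conj_sub_inv_smul_of_norm_lt hgρ hgt,
        Set.indicator_of_notMem fun h ↦ hgt.not_ge h.2]
  · have hzρ : ‖z - c‖ < ρ := (mem_ball_iff_norm.1 hz).trans_le hrρ
    rw [Set.indicator_of_notMem fun h ↦ hzρ.not_ge h.2, ← circleAverage_const (0 : E) c ρ]
    refine circleAverage_congr_sphere fun ζ hζ ↦ Set.indicator_of_notMem (fun hmem ↦ ?_) _
    rw [abs_of_pos hρ, mem_sphere] at hζ
    exact (hζ ▸ mem_ball.1 hmem).not_ge hrρ

theorem setIntegral_ball_conj_sub_inv_smul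
    (hint : IntegrableOn (fun ζ ↦ (conj ζ - conj z)⁻¹ • g ζ) (ball c r))
    (hG : ∀ ζ ∈ ball c r, HasDerivAt G (g ζ) ζ) (hz : z ∈ ball c r) :
    ∫ ζ in ball c r, (conj ζ - conj z)⁻¹ • g ζ = -π • (G z - G c) := by
  have hg : DifferentiableOn ℂ g (ball c r) :=
    (DifferentiableOn.deriv (fun ζ hζ ↦ (hG ζ hζ).differentiableAt.differentiableWithinAt)
      isOpen_ball).congr fun ζ hζ ↦ (hG ζ hζ).deriv.symm
  have hradial : ∀ᵐ ρ : ℝ, ρ ∈ Set.Ioi (0 : ℝ) →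
      ρ • circleAverage ((ball c r).indicator fun ζ ↦ (conj ζ - conj z)⁻¹ • g ζ) c ρ =
        (Set.Ioc 0 ‖z - c‖).indicator (fun ρ : ℝ ↦ (-(1 / 2) : ℝ) •
          (2 * ρ / conj (z - c)) • g (c + ρ ^ 2 / conj (z - c))) ρ := by
    filter_upwards [Measure.ae_ne volume ‖z - c‖] with ρ hρz hρ
    rw [circleAverage_indicator_ball_conj_sub_inv_smul hg hz hρ hρz, Set.indicator_apply,
      Set.indicator_apply]
    split_ifs
    · simp only [← Complex.coe_smul]
      module
    · rw [smul_zero]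
  rw [← integral_indicator measurableSet_ball, integral_eq_integral_smul_circleAverage
    ((integrable_indicator_iff measurableSet_ball).2 hint) c,
    setIntegral_congr_ae measurableSet_Ioi hradial, setIntegral_indicator measurableSet_Ioc,
    Set.inter_eq_right.2 Set.Ioc_subset_Ioi_self, ← intervalIntegral.integral_of_le
    (norm_nonneg _), intervalIntegral.integral_smul,
    intervalIntegral_smul_comp_sq_div_conj hg.continuousOn hG hz]
  module

end DiscIntegral

section ExponentialTransform

open Metric ComplexConjugate

variable {A B : Set ℂ} {c z w : ℂ} {r : ℝ}

/-- The conjugate Cauchy kernel with pole `w`, as a density on the `ζ`-plane: `doubleCauchy A · w`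
is `-1 / π` times its Cauchy transform. -/
noncomputable def conjKernel (w ζ : ℂ) : ℂ :=
  (conj ζ - conj w)⁻¹

theorem conj_sub_conj_ne_zero (h : z ≠ w) : conj z - conj w ≠ 0 :=
  sub_ne_zero.2 ((starRingEnd ℂ).injective.ne h)

theorem memLp_top_conjKernel (hw : w ∉ closure A) :
    MemLp (conjKernel w) ⊤ (volume.restrict A) := by
  obtain ⟨δ, hδ, hball⟩ :=
    Metric.mem_nhds_iff.1 (isClosed_closure.isOpen_compl.mem_nhds hw)
  have hmeas : Measurable (conjKernel w) := by
    unfold conjKernel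
    fun_prop
  refine (memLp_top_of_bound hmeas.aestronglyMeasurable δ⁻¹ ?_).mono_measure
    (Measure.restrict_mono subset_closure le_rfl)
  filter_upwards [ae_restrict_mem isClosed_closure.measurableSet] with ζ hζ
  rw [conjKernel, norm_inv, ← map_sub, RCLike.norm_conj, ← dist_eq_norm]
  exact inv_anti₀ hδ (not_lt.1 fun hlt ↦ hball hlt hζ)

theorem integrableOn_conjKernel (hA_bdd : IsBounded A) (hw : w ∉ closure A) :
    IntegrableOn (conjKernel w) A := by
  have : IsFiniteMeasure (volume.restrict A) :=
    isFiniteMeasure_restrict.2 hA_bdd.measure_lt_top.ne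
  exact (memLp_top_conjKernel hw).integrable le_top

theorem doubleCauchy_eq_cauchyTransform (A : Set ℂ) (z w : ℂ) :
    doubleCauchy A z w = -(1 / (Real.pi : ℂ)) * cauchyTransform A (conjKernel w) z := by
  simp only [doubleCauchy, cauchyTransform, conjKernel, mul_inv]

theorem expTransform_ne_zero (A : Set ℂ) (z w : ℂ) : expTransform A z w ≠ 0 :=
  exp_ne_zero _

theorem expTransform_union (hAB : Disjoint A B) (hB : MeasurableSet B) (hA_bdd : IsBounded A)
    (hB_bdd : IsBounded B) (hwA : w ∉ closure A) (hwB : w ∉ closure B) (z : ℂ) :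
    expTransform (A ∪ B) z w = expTransform A z w * expTransform B z w := by
  simp only [expTransform, doubleCauchy_eq_cauchyTransform, ← exp_add]
  rw [cauchyTransform_union hAB hB hA_bdd hB_bdd (memLp_top_conjKernel hwA)
    (memLp_top_conjKernel hwB), mul_add]

theorem continuous_expTransform (hA : MeasurableSet A) (hA_bdd : IsBounded A)
    (hw : w ∉ closure A) : Continuous fun z ↦ expTransform A z w := by
  simp only [expTransform, doubleCauchy_eq_cauchyTransform]
  exact continuous_exp.comp (continuous_const.mul
    (continuous_cauchyTransform hA hA_bdd (memLp_top_conjKernel hw)))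

theorem differentiableAt_expTransform (hA : MeasurableSet A) (hA_bdd : IsBounded A)
    (hw : w ∉ closure A) (hz : z ∉ closure A) :
    DifferentiableAt ℂ (fun z ↦ expTransform A z w) z := by
  simp only [expTransform, doubleCauchy_eq_cauchyTransform]
  exact ((differentiableAt_cauchyTransform hA (integrableOn_conjKernel hA_bdd hw)
    hz).const_mul _).cexp

theorem tendsto_expTransform_cobounded (hA : MeasurableSet A) (hA_bdd : IsBounded A)
    (hw : w ∉ closure A) : Tendsto (fun z ↦ expTransform A z w) (cobounded ℂ) (𝓝 1) := by
  have hlim := (tendsto_cauchyTransform_cobounded hA hA_bdd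
    (integrableOn_conjKernel hA_bdd hw)).const_mul (-(1 / (Real.pi : ℂ)))
  rw [mul_zero] at hlim
  simpa only [expTransform, doubleCauchy_eq_cauchyTransform, exp_zero] using hlim.cexp

theorem cauchyTransform_ball_conjKernel (hw : w ∉ closure (ball c r)) (hz : z ∈ ball c r) :
    cauchyTransform (ball c r) (conjKernel w) z =
      -Real.pi * conj (log ((z - w) / (c - w))) := by
  have hcw : c - w ≠ 0 := sub_ne_zero.2 fun h ↦
    hw (subset_closure (h ▸ mem_ball_self (pos_of_mem_ball hz)))
  have hlog (ζ : ℂ) (hζ : ζ ∈ ball c r) :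
      HasDerivAt (fun ζ ↦ log ((ζ - w) / (c - w))) (ζ - w)⁻¹ ζ := by
    have hlt : ‖(ζ - c) / (c - w)‖ < 1 := by
      rw [norm_div, div_lt_one (norm_pos_iff.2 hcw)]
      refine (mem_ball_iff_norm.1 hζ).trans_le ?_
      rw [norm_sub_rev]
      exact not_lt.1 fun hlt ↦ hw (subset_closure (mem_ball_iff_norm.2 hlt))
    have hslit : (ζ - w) / (c - w) ∈ slitPlane := by
      convert mem_slitPlane_of_norm_lt_one hlt using 1
      field_simp
      ring
    convert (((hasDerivAt_id' ζ).sub_const w).div_const (c - w)).clog hslit using 1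
    rw [div_div_div_cancel_right₀ hcw, one_div]
  have hint := integrableOn_inv_sub_mul isBounded_ball (memLp_top_conjKernel hw) z
  have hdisc := setIntegral_ball_conj_sub_inv_smul (z := z) (g := fun ζ ↦ (ζ - w)⁻¹)
    (conjCLE.integrable_comp_iff.2 hint |>.congr (.of_forall fun ζ ↦ by simp [conjKernel]))
    hlog hz
  rw [div_self hcw, log_one, sub_zero] at hdisc
  rw [← conj_conj (cauchyTransform _ _ _), cauchyTransform, ← integral_conj]
  simpa [conjKernel] using congrArg conj hdisc

theorem expTransform_ball (hw : w ∉ closure (ball c r)) (hz : z ∈ ball c r) :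
    expTransform (ball c r) z w = (conj z - conj w) / (conj c - conj w) := by
  have hne {ζ : ℂ} (hζ : ζ ∈ ball c r) : ζ - w ≠ 0 :=
    sub_ne_zero.2 fun h ↦ hw (subset_closure (h ▸ hζ))
  have hlog : doubleCauchy (ball c r) z w = conj (log ((z - w) / (c - w))) := by
    rw [doubleCauchy_eq_cauchyTransform, cauchyTransform_ball_conjKernel hw hz]
    field_simp
  rw [expTransform, hlog, exp_conj, exp_log (div_ne_zero (hne hz)
    (hne (mem_ball_self (pos_of_mem_ball hz)))), map_div₀, map_sub, map_sub]

-- Near an interior point, split off a disc: its factor is `conj z - conj w` up to a constant, and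
-- the factor of the rest is holomorphic.
theorem differentiableAt_expTransform_div_conj_sub (hA : MeasurableSet A) (hA_bdd : IsBounded A)
    (hw : w ∉ closure A) (hz : z ∈ interior A) :
    DifferentiableAt ℂ (fun z ↦ expTransform A z w / (conj z - conj w)) z := by
  obtain ⟨r, hr, hball⟩ := Metric.mem_nhds_iff.1 (mem_interior_iff_mem_nhds.1 hz)
  have hwball : w ∉ closure (ball z r) := fun h ↦ hw (closure_mono hball h)
  have hwdiff : w ∉ closure (A \ ball z r) := fun h ↦ hw (closure_mono Set.sdiff_subset h)
  have hzdiff : z ∉ closure (A \ ball z r) := fun h ↦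
    (isOpen_ball.isClosed_compl.closure_subset_iff.2 (Set.sdiff_subset_compl A _)) h
      (mem_ball_self hr)
  refine ((differentiableAt_expTransform (hA.diff measurableSet_ball)
    (hA_bdd.subset Set.sdiff_subset) hwdiff hzdiff).div_const
    (conj z - conj w)).congr_of_eventuallyEq ?_
  filter_upwards [ball_mem_nhds z hr] with x hx
  have hxw : conj x - conj w ≠ 0 :=
    conj_sub_conj_ne_zero fun h ↦ hwball (subset_closure (h ▸ hx))
  have hsplit := expTransform_union Set.disjoint_sdiff_right (hA.diff measurableSet_ball)
    isBounded_ball (hA_bdd.subset Set.sdiff_subset) hwball hwdiff x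
  rw [Set.union_sdiff_cancel hball, expTransform_ball hwball hx] at hsplit
  rw [hsplit]
  field_simp

end ExponentialTransform

section NormalizedSections

variable {Ω V W : Set ℂ} {T f₁ f₂ g₁ g₂ : ℂ → ℂ}

/-- `f₁` and `f₂`, holomorphic on `Ω ∪ V` and on `(closure Ω)ᶜ ∪ V`, form a section of the line
bundle on the Riemann sphere whose transition function over the collar `V` of `frontier Ω` is
`1 / T`, in the sense that `f₁ * T = f₂` there, and the section takes the value one at infinity. -/
structure IsNormalizedSection (Ω V : Set ℂ) (T f₁ f₂ : ℂ → ℂ) : Prop where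
  differentiableOn_interior : DifferentiableOn ℂ f₁ (Ω ∪ V)
  differentiableOn_exterior : DifferentiableOn ℂ f₂ ((closure Ω)ᶜ ∪ V)
  transition : ∀ z ∈ V, f₁ z * T z = f₂ z
  tendsto_cobounded : Tendsto f₂ (cobounded ℂ) (𝓝 1)

theorem eq_const_of_eqOn_collar {E : Type*} [NormedAddCommGroup E] [NormedSpace ℂ E]
    {u₁ u₂ : ℂ → E} {a : E} (hΩ : IsOpen Ω) (hΩ_bdd : IsBounded Ω) (hW : IsOpen W)
    (hΩW : frontier Ω ⊆ W) (hu₁ : DifferentiableOn ℂ u₁ (Ω ∪ W))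
    (hu₂ : DifferentiableOn ℂ u₂ ((closure Ω)ᶜ ∪ W)) (hu : Set.EqOn u₁ u₂ W)
    (hlim : Tendsto u₂ (cobounded ℂ) (𝓝 a)) :
    (∀ z ∈ Ω, u₁ z = a) ∧ ∀ z ∈ (closure Ω)ᶜ, u₂ z = a := by
  classical
  set u := Ω.piecewise u₁ u₂
  have huΩ : Set.EqOn u u₁ Ω := Set.piecewise_eqOn Ω u₁ u₂
  have huΩc : Set.EqOn u u₂ Ωᶜ := Set.piecewise_eqOn_compl Ω u₁ u₂
  have huW : Set.EqOn u u₁ W := fun z hz ↦ by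
    by_cases hzΩ : z ∈ Ω
    · exact huΩ hzΩ
    · rw [huΩc hzΩ, hu hz]
  have hext : (closure Ω)ᶜ ⊆ Ωᶜ := Set.compl_subset_compl.2 subset_closure
  have hcover (z : ℂ) : z ∈ Ω ∪ W ∨ z ∈ (closure Ω)ᶜ := by
    by_cases hz : z ∈ closure Ω
    · rw [closure_eq_self_union_frontier] at hz
      exact .inl (Set.union_subset_union_right Ω hΩW hz)
    · exact .inr hz
  have hdiff : Differentiable ℂ u := fun z ↦ by
    rcases hcover z with hz | hz
    · exact (hu₁.congr (huΩ.union huW)).differentiableAt ((hΩ.union hW).mem_nhds hz)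
    · exact ((hu₂.mono Set.subset_union_left).congr (huΩc.mono hext)).differentiableAt
        (isClosed_closure.isOpen_compl.mem_nhds hz)
  have htendsto : Tendsto u (cobounded ℂ) (𝓝 a) :=
    hlim.congr' ((huΩc.symm).eventuallyEq_of_mem (isBounded_def.1 hΩ_bdd))
  rw [Metric.cobounded_eq_cocompact] at htendsto
  have hconst (z : ℂ) : u z = a := hdiff.apply_eq_of_tendsto_cocompact z htendsto
  exact ⟨fun z hz ↦ huΩ hz ▸ hconst z, fun z hz ↦ huΩc (hext hz) ▸ hconst z⟩

theorem IsNormalizedSection.eqOn (hΩ : IsOpen Ω) (hΩ_bdd : IsBounded Ω) (hV : IsOpen V)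
    (hΩV : frontier Ω ⊆ V) (hW : IsOpen W) (hΩW : frontier Ω ⊆ W)
    (hg : IsNormalizedSection Ω W T g₁ g₂) (hf : IsNormalizedSection Ω V T f₁ f₂)
    (hf₁ : ∀ z ∈ Ω, f₁ z ≠ 0) (hf₂ : ∀ z ∈ (closure Ω)ᶜ ∪ V, f₂ z ≠ 0) :
    (∀ z ∈ Ω, g₁ z = f₁ z) ∧ ∀ z ∈ (closure Ω)ᶜ, g₂ z = f₂ z := by
  have hfT (z : ℂ) (hz : z ∈ V) : f₁ z ≠ 0 ∧ T z ≠ 0 :=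
    mul_ne_zero_iff.1 (hf.transition z hz ▸ hf₂ z (.inr hz))
  have hf₁' (z : ℂ) (hz : z ∈ Ω ∪ V) : f₁ z ≠ 0 := hz.elim (hf₁ z) fun h ↦ (hfT z h).1
  have hlim := hg.tendsto_cobounded.div hf.tendsto_cobounded one_ne_zero
  rw [div_one] at hlim
  obtain ⟨h₁, h₂⟩ := eq_const_of_eqOn_collar hΩ hΩ_bdd (hV.inter hW)
    (Set.subset_inter hΩV hΩW)
    ((hg.differentiableOn_interior.mono (by gcongr; exact Set.inter_subset_right)).div
      (hf.differentiableOn_interior.mono (by gcongr; exact Set.inter_subset_left))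
      fun z hz ↦ hf₁' z (Set.union_subset_union_right Ω Set.inter_subset_left hz))
    ((hg.differentiableOn_exterior.mono (by gcongr; exact Set.inter_subset_right)).div
      (hf.differentiableOn_exterior.mono (by gcongr; exact Set.inter_subset_left))
      fun z hz ↦ hf₂ z (Set.union_subset_union_right _ Set.inter_subset_left hz))
    (fun z hz ↦ by
      rw [Pi.div_apply, Pi.div_apply, ← hf.transition z hz.1, ← hg.transition z hz.2,
        mul_div_mul_right _ _ (hfT z hz.1).2])
    hlim
  exact ⟨fun z hz ↦ (div_eq_one_iff_eq (hf₁ z hz)).1 (h₁ z hz),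
    fun z hz ↦ (div_eq_one_iff_eq (hf₂ z (.inl hz))).1 (h₂ z hz)⟩

end NormalizedSections

section ExponentialTransformSection

open ComplexConjugate

variable {Ω U V : Set ℂ} {S : ℂ → ℂ} {w z : ℂ}

open Classical in
/-- The interior half of the section defined by the exponential transform: off `Ω` the reflection
`conj z` is replaced by its holomorphic continuation `S z`. -/
noncomputable def interiorSection (Ω : Set ℂ) (S : ℂ → ℂ) (w : ℂ) : ℂ → ℂ :=
  Ω.piecewise (fun z ↦ expTransform Ω z w / (conj z - conj w))
    fun z ↦ expTransform Ω z w / (S z - conj w)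

open Classical in
/-- The exterior half of the section defined by the exponential transform, continued into `Ω` by
the transition function. -/
noncomputable def exteriorSection (Ω : Set ℂ) (S : ℂ → ℂ) (w : ℂ) : ℂ → ℂ :=
  Ω.piecewise (fun z ↦ expTransform Ω z w / (conj z - conj w) * (S z - conj w))
    fun z ↦ expTransform Ω z w

theorem interiorSection_of_mem (S : ℂ → ℂ) (w : ℂ) (hz : z ∈ Ω) :
    interiorSection Ω S w z = expTransform Ω z w / (conj z - conj w) :=
  if_pos hz

theorem interiorSection_of_notMem (S : ℂ → ℂ) (w : ℂ) (hz : z ∉ Ω) :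
    interiorSection Ω S w z = expTransform Ω z w / (S z - conj w) :=
  if_neg hz

theorem exteriorSection_of_mem (S : ℂ → ℂ) (w : ℂ) (hz : z ∈ Ω) :
    exteriorSection Ω S w z = expTransform Ω z w / (conj z - conj w) * (S z - conj w) :=
  if_pos hz

theorem exteriorSection_of_notMem (S : ℂ → ℂ) (w : ℂ) (hz : z ∉ Ω) :
    exteriorSection Ω S w z = expTransform Ω z w :=
  if_neg hz

theorem interiorSection_mul (Ω : Set ℂ) (hz : S z ≠ conj w) :
    interiorSection Ω S w z * (S z - conj w) = exteriorSection Ω S w z := by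
  by_cases hzΩ : z ∈ Ω
  · rw [interiorSection_of_mem S w hzΩ, exteriorSection_of_mem S w hzΩ]
  · rw [interiorSection_of_notMem S w hzΩ, exteriorSection_of_notMem S w hzΩ,
      div_mul_cancel₀ _ (sub_ne_zero.2 hz)]

theorem interiorSection_ne_zero (S : ℂ → ℂ) (hw : w ∉ closure Ω) (hz : z ∈ Ω) :
    interiorSection Ω S w z ≠ 0 := by
  rw [interiorSection_of_mem S w hz]
  exact div_ne_zero (expTransform_ne_zero Ω z w)
    (conj_sub_conj_ne_zero fun h ↦ hw (subset_closure (h ▸ hz)))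

theorem exteriorSection_ne_zero (hw : w ∉ closure Ω) (hz : z ∈ Ω → S z ≠ conj w) :
    exteriorSection Ω S w z ≠ 0 := by
  by_cases hzΩ : z ∈ Ω
  · rw [← interiorSection_mul Ω (hz hzΩ)]
    exact mul_ne_zero (interiorSection_ne_zero S hw hzΩ) (sub_ne_zero.2 (hz hzΩ))
  · rw [exteriorSection_of_notMem S w hzΩ]
    exact expTransform_ne_zero Ω z w

theorem tendsto_exteriorSection_cobounded (hΩ : MeasurableSet Ω) (hΩ_bdd : IsBounded Ω)
    (S : ℂ → ℂ) (hw : w ∉ closure Ω) :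
    Tendsto (exteriorSection Ω S w) (cobounded ℂ) (𝓝 1) := by
  refine (tendsto_expTransform_cobounded hΩ hΩ_bdd hw).congr' ?_
  filter_upwards [isBounded_def.1 hΩ_bdd] with z hz
  exact (exteriorSection_of_notMem S w hz).symm

theorem differentiableAt_interiorSection (hΩ : MeasurableSet Ω) (hΩ_bdd : IsBounded Ω)
    (S : ℂ → ℂ) (hw : w ∉ closure Ω) (hz : z ∈ interior Ω) :
    DifferentiableAt ℂ (interiorSection Ω S w) z := by
  refine (differentiableAt_expTransform_div_conj_sub hΩ hΩ_bdd hw hz).congr_of_eventuallyEq ?_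
  filter_upwards [isOpen_interior.mem_nhds hz] with x hx
  exact interiorSection_of_mem S w (interior_subset hx)

theorem differentiableAt_exteriorSection (hΩ : MeasurableSet Ω) (hΩ_bdd : IsBounded Ω)
    (S : ℂ → ℂ) (hw : w ∉ closure Ω) (hz : z ∉ closure Ω) :
    DifferentiableAt ℂ (exteriorSection Ω S w) z := by
  refine (differentiableAt_expTransform hΩ hΩ_bdd hw hz).congr_of_eventuallyEq ?_
  filter_upwards [isClosed_closure.isOpen_compl.mem_nhds hz] with x hx
  exact exteriorSection_of_notMem S w fun h ↦ hx (subset_closure h)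

theorem continuousOn_exteriorSection (hΩ : MeasurableSet Ω) (hΩ_bdd : IsBounded Ω)
    (hS : ContinuousOn S V) (hSΩ : ∀ z ∈ frontier Ω, S z = conj z) (hw : w ∉ closure Ω) :
    ContinuousOn (exteriorSection Ω S w) V := by
  classical
  have hne (z : ℂ) (hz : z ∈ closure Ω) : conj z - conj w ≠ 0 :=
    conj_sub_conj_ne_zero fun h ↦ hw (h ▸ hz)
  have hE := continuous_expTransform hΩ hΩ_bdd hw
  refine ContinuousOn.piecewise (fun z hz ↦ ?_) ?_ hE.continuousOn
  · rw [hSΩ z hz.2, div_mul_cancel₀ _ (hne z (frontier_subset_closure hz.2))]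
  · exact (hE.continuousOn.div (by fun_prop) fun z hz ↦ hne z hz.2).mul
      ((hS.mono Set.inter_subset_left).sub continuousOn_const)

theorem differentiableOn_exteriorSection (hΩ : MeasurableSet Ω) (hΩ_bdd : IsBounded Ω)
    (hV : IsOpen V) (hS : DifferentiableOn ℂ S V) (hSΩ : ∀ z ∈ frontier Ω, S z = conj z)
    (hSw : ∀ z ∈ V, S z ≠ conj w) (hw : w ∉ closure Ω) :
    DifferentiableOn ℂ (exteriorSection Ω S w) V := by
  refine differentiableOn_of_differentiableAt_off_schwarz hV hS
    (continuousOn_exteriorSection hΩ hΩ_bdd hS.continuousOn hSΩ hw) fun z hzV hSz ↦ ?_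
  by_cases hz : z ∈ closure Ω
  · have hzΩ : z ∈ interior Ω := by
      by_contra h
      exact hSz (hSΩ z ⟨hz, h⟩)
    have hVnhds := hV.mem_nhds hzV
    refine ((differentiableAt_interiorSection hΩ hΩ_bdd S hw hzΩ).mul
      ((hS.differentiableAt hVnhds).sub_const (conj w))).congr_of_eventuallyEq ?_
    filter_upwards [hVnhds] with x hx
    exact (interiorSection_mul Ω (hSw x hx)).symm
  · exact differentiableAt_exteriorSection hΩ hΩ_bdd S hw hz

theorem isNormalizedSection_interiorSection_exteriorSection (hΩ : IsOpen Ω)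
    (hΩ_bdd : IsBounded Ω) (hV : IsOpen V) (hS : DifferentiableOn ℂ S V)
    (hSΩ : ∀ z ∈ frontier Ω, S z = conj z) (hSw : ∀ z ∈ V, S z ≠ conj w) (hw : w ∉ closure Ω) :
    IsNormalizedSection Ω V (fun z ↦ S z - conj w) (interiorSection Ω S w)
      (exteriorSection Ω S w) where
  differentiableOn_interior := by
    have hΩ_meas := hΩ.measurableSet
    refine DifferentiableOn.union_of_isOpen (fun z hz ↦ ?_) ?_ hΩ hV
    · exact (differentiableAt_interiorSection hΩ_meas hΩ_bdd S hw
        (hΩ.interior_eq.symm ▸ hz)).differentiableWithinAt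
    · refine ((differentiableOn_exteriorSection hΩ_meas hΩ_bdd hV hS hSΩ hSw hw).div
        (hS.sub_const (conj w)) fun z hz ↦ sub_ne_zero.2 (hSw z hz)).congr fun z hz ↦ ?_
      rw [Pi.div_apply, ← interiorSection_mul Ω (hSw z hz),
        mul_div_cancel_right₀ _ (sub_ne_zero.2 (hSw z hz))]
  differentiableOn_exterior :=
    DifferentiableOn.union_of_isOpen
      (fun _ hz ↦ (differentiableAt_exteriorSection hΩ.measurableSet hΩ_bdd S hw
        hz).differentiableWithinAt)
      (differentiableOn_exteriorSection hΩ.measurableSet hΩ_bdd hV hS hSΩ hSw hw)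
      isClosed_closure.isOpen_compl hV
  transition z hz := interiorSection_mul Ω (hSw z hz)
  tendsto_cobounded := tendsto_exteriorSection_cobounded hΩ.measurableSet hΩ_bdd S hw

theorem exponential_transform_section_exterior_general (hΩ : IsOpen Ω) (hΩ_bdd : IsBounded Ω)
    (hU : IsOpen U) (hΩU : frontier Ω ⊆ U) (hS : DifferentiableOn ℂ S U)
    (hSΩ : ∀ z ∈ frontier Ω, S z = conj z) (hw : w ∉ closure Ω) :
    ∃ (V : Set ℂ) (f₁ f₂ : ℂ → ℂ), IsOpen V ∧ V ⊆ U ∧ frontier Ω ⊆ V ∧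
      IsNormalizedSection Ω V (fun z ↦ S z - conj w) f₁ f₂ ∧
      (∀ z ∉ closure Ω, f₂ z = expTransform Ω z w) ∧
      (∀ z ∈ Ω, f₁ z = expTransform Ω z w / (conj z - conj w)) ∧
      ∀ (W : Set ℂ) (g₁ g₂ : ℂ → ℂ), IsOpen W → frontier Ω ⊆ W →
        IsNormalizedSection Ω W (fun z ↦ S z - conj w) g₁ g₂ →
        (∀ z ∈ Ω, g₁ z = f₁ z) ∧ ∀ z ∈ (closure Ω)ᶜ, g₂ z = f₂ z := by
  have hV : IsOpen (U ∩ S ⁻¹' {conj w}ᶜ) :=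
    hS.continuousOn.isOpen_inter_preimage hU isOpen_compl_singleton
  have hΩV : frontier Ω ⊆ U ∩ S ⁻¹' {conj w}ᶜ := fun z hz ↦
    ⟨hΩU hz, fun hSz ↦ by
      have hzw : z = w := (starRingEnd ℂ).injective ((hSΩ z hz).symm.trans hSz)
      exact hw (hzw ▸ frontier_subset_closure hz)⟩
  have hsec := isNormalizedSection_interiorSection_exteriorSection hΩ hΩ_bdd hV
    (hS.mono Set.inter_subset_left) hSΩ (fun _ hz ↦ hz.2) hw
  refine ⟨_, _, _, hV, Set.inter_subset_left, hΩV, hsec,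
    fun z hz ↦ exteriorSection_of_notMem S w fun h ↦ hz (subset_closure h),
    fun z hz ↦ interiorSection_of_mem S w hz, fun W g₁ g₂ hW hΩW hg ↦ ?_⟩
  exact hg.eqOn hΩ hΩ_bdd hV hΩV hW hΩW hsec (fun z hz ↦ interiorSection_ne_zero S hw hz)
    fun z hz ↦ exteriorSection_ne_zero hw fun hzΩ ↦
      hz.elim (fun h ↦ absurd (subset_closure hzΩ) h) fun h ↦ h.2

end ExponentialTransformSection

/-- For `w` outside `closure Ω`, the pair `(G(·,w), F(·,w))` built from the
exponential transform is the unique holomorphic section of the line bundle with transition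
function `1/(S(z) − conj w)` which takes the value one at infinity. -/
theorem exponential_transform_section_exterior
    (Ω : Set ℂ) (hΩopen : IsOpen Ω) (hΩbdd : Bornology.IsBounded Ω)
    (hΩconn : IsConnected Ω) (hΩsc : SimplyConnectedSpace Ω)
    (γ : ℝ → ℂ) (hγan : ∀ t, AnalyticAt ℝ γ t)
    (hγper : Function.Periodic γ (2 * Real.pi))
    (hγ' : ∀ t, deriv γ t ≠ 0)
    (hΓ : frontier Ω = Set.range γ)
    (hwind : ∀ z ∈ Ω,
      (1 / (2 * Real.pi * Complex.I)) *
        (∫ t in (0:ℝ)..(2 * Real.pi), deriv γ t / (γ t - z)) = 1)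
    (U : Set ℂ) (hU : IsOpen U) (hΓU : frontier Ω ⊆ U)
    (S : ℂ → ℂ) (hS : DifferentiableOn ℂ S U)
    (hSval : ∀ z ∈ frontier Ω, S z = (starRingEnd ℂ) z)
    (w : ℂ) (hw : w ∉ closure Ω) :
    ∃ (V : Set ℂ) (f₁ f₂ : ℂ → ℂ), IsOpen V ∧ V ⊆ U ∧ frontier Ω ⊆ V ∧
      DifferentiableOn ℂ f₁ (Ω ∪ V) ∧
      DifferentiableOn ℂ f₂ ((closure Ω)ᶜ ∪ V) ∧
      (∀ z ∈ V, f₁ z * (S z - (starRingEnd ℂ) w) = f₂ z) ∧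
      Tendsto f₂ (Bornology.cobounded ℂ) (𝓝 1) ∧
      (∀ z ∉ closure Ω, f₂ z = expTransform Ω z w) ∧
      (∀ z ∈ Ω, f₁ z = expTransform Ω z w / ((starRingEnd ℂ) z - (starRingEnd ℂ) w)) ∧
      (∀ (V' : Set ℂ) (g₁ g₂ : ℂ → ℂ), IsOpen V' → V' ⊆ U → frontier Ω ⊆ V' →
        DifferentiableOn ℂ g₁ (Ω ∪ V') →
        DifferentiableOn ℂ g₂ ((closure Ω)ᶜ ∪ V') →
        (∀ z ∈ V', g₁ z * (S z - (starRingEnd ℂ) w) = g₂ z) →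
        Tendsto g₂ (Bornology.cobounded ℂ) (𝓝 1) →
        (∀ z ∈ Ω, g₁ z = f₁ z) ∧ (∀ z ∈ (closure Ω)ᶜ, g₂ z = f₂ z)) := by
  obtain ⟨V, f₁, f₂, hV, hVU, hΓV, hf, hf₂, hf₁, huniq⟩ :=
    exponential_transform_section_exterior_general hΩopen hΩbdd hU hΓU hS hSval hw
  exact ⟨V, f₁, f₂, hV, hVU, hΓV, hf.1, hf.2, hf.3, hf.4, hf₂, hf₁,
    fun W g₁ g₂ hW _ hΓW hg₁ hg₂ hg hlim ↦ huniq W g₁ g₂ hW hΓW ⟨hg₁, hg₂, hg, hlim⟩⟩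
end

section
/- Suppose Ω is a quadrature domain in the sense that its Schwarz function extends meromorphically to Ω: there are finitely many distinct points a_1, …, a_n ∈ Ω, an open neighborhood V of Γ, and a holomorphic function S on (Ω \ {a_1, …, a_n}) ∪ V with S(z) = conj(z) for all z ∈ Γ. Then for every function f holomorphic on an open set containing closure(Ω) and every ε > 0 small enough that the closed disks of radius ε around the a_j are pairwise disjoint and contained in Ω \ V: (1/π) ∫_Ω f dA = Σ_{j=1}^n (1/(2πi)) ∮_{|z−a_j|=ε} f(z)·S(z) dz, where ∮_{|z−a_j|=ε} denotes the integral over the positively oriented circle of radius ε centered at a_j. -/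
open Complex MeasureTheory Filter Topology Bornology

/-!
Changing `S` only inside the disks turns it into a function `T` that is `C¹` on `closure Ω` and
still equals `z̄` on `∂Ω`. The function `F = (z̄ - T) f` vanishes on `∂Ω`, so its extension by zero
is Lipschitz with compact support and its derivative vanishes almost everywhere on `∂Ω`. Hence
`∫_Ω ∂̄F dA = 0`, with no regularity of `∂Ω` needed. Since `∂̄(z̄ f) = f`, this says that
`∫_Ω f dA = ∫_Ω ∂̄(T f) dA`. The integrand on the right vanishes off the disks, where `T = S`, and
on each disk Green's formula, read in polar coordinates, gives a circle integral.
-/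

theorem nonempty_inter_frontier_of_isPreconnected {X : Type*} [TopologicalSpace X] {s U : Set X}
    (hs : IsPreconnected s) {x y : X} (hxs : x ∈ s) (hxU : x ∈ U) (hys : y ∈ s) (hyU : y ∉ U) :
    (s ∩ frontier U).Nonempty := by
  by_contra! hempty
  have hcover : s ⊆ interior U ∪ interior Uᶜ := by
    rw [← compl_frontier_eq_union_interior]
    exact Set.subset_compl_iff_disjoint_right.2 (Set.disjoint_iff_inter_eq_empty.2 hempty)
  have hx : x ∈ interior U := (hcover hxs).resolve_right fun h => interior_subset h hxU
  have hsub : s ⊆ interior U :=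
    hs.subset_left_of_subset_union isOpen_interior isOpen_interior
      (disjoint_compl_right.mono interior_subset interior_subset) hcover ⟨x, hxs, hx⟩
  exact hyU (interior_subset (hsub hys))

section Indicator

variable {E F : Type*} [NormedAddCommGroup E] [NormedSpace ℝ E] [NormedAddCommGroup F]
  {U s : Set E} {g : E → F}

theorem norm_le_mul_norm_sub_of_eq_zero_frontier {C : NNReal} (hs : Convex ℝ s)
    (hg : LipschitzOnWith C g (s ∩ closure U)) (hzero : ∀ z ∈ frontier U, g z = 0) {x y : E}
    (hxs : x ∈ s) (hys : y ∈ s) (hxU : x ∈ U) (hyU : y ∉ U) : ‖g x‖ ≤ C * ‖x - y‖ := by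
  obtain ⟨w, hwseg, hwU⟩ := nonempty_inter_frontier_of_isPreconnected
    (convex_segment x y).isPreconnected (left_mem_segment ℝ x y) hxU (right_mem_segment ℝ x y) hyU
  have hxw : ‖x - w‖ ≤ ‖x - y‖ := by
    have := dist_add_dist_of_mem_segment hwseg
    simp only [dist_eq_norm] at this
    linarith [norm_nonneg (w - y)]
  calc ‖g x‖ = ‖g x - g w‖ := by rw [hzero w hwU, sub_zero]
    _ ≤ C * ‖x - w‖ := hg.norm_sub_le ⟨hxs, subset_closure hxU⟩
        ⟨hs.segment_subset hxs hys hwseg, frontier_subset_closure hwU⟩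
    _ ≤ C * ‖x - y‖ := by gcongr

theorem lipschitzOnWith_indicator_of_eq_zero_frontier {C : NNReal} (hs : Convex ℝ s)
    (hg : LipschitzOnWith C g (s ∩ closure U)) (hzero : ∀ z ∈ frontier U, g z = 0) :
    LipschitzOnWith C (U.indicator g) s := by
  refine LipschitzOnWith.of_dist_le_mul fun x hx y hy => ?_
  rw [dist_eq_norm, dist_eq_norm]
  by_cases hxU : x ∈ U <;> by_cases hyU : y ∈ U
  · simpa only [Set.indicator_of_mem, hxU, hyU] using
      hg.norm_sub_le ⟨hx, subset_closure hxU⟩ ⟨hy, subset_closure hyU⟩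
  · simpa [hxU, hyU] using norm_le_mul_norm_sub_of_eq_zero_frontier hs hg hzero hx hy hxU hyU
  · simpa [hxU, hyU, norm_sub_rev] using
      norm_le_mul_norm_sub_of_eq_zero_frontier hs hg hzero hy hx hyU hxU
  · simp only [Set.indicator_of_notMem, hxU, hyU, not_false_eq_true, sub_self, norm_zero]
    positivity

theorem exists_lipschitzWith_indicator_of_eq_zero_frontier [NormedSpace ℝ F]
    (hU : IsCompact (closure U)) (hg : ∀ z ∈ closure U, ContDiffAt ℝ 1 g z)
    (hzero : ∀ z ∈ frontier U, g z = 0) : ∃ C, LipschitzWith C (U.indicator g) := by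
  have hloc : LocallyLipschitzOn (closure U) (U.indicator g) := by
    intro p hp
    obtain ⟨C, t, ht, hC⟩ := (hg p hp).exists_lipschitzOnWith
    obtain ⟨r, hr, hrt⟩ := Metric.mem_nhds_iff.1 ht
    exact ⟨C, Metric.ball p r, mem_nhdsWithin_of_mem_nhds (Metric.ball_mem_nhds p hr),
      lipschitzOnWith_indicator_of_eq_zero_frontier (convex_ball p r)
        (hC.mono (Set.inter_subset_left.trans hrt)) hzero⟩
  obtain ⟨C, hC⟩ := hloc.exists_lipschitzOnWith_of_compact hU
  have hglobal := lipschitzOnWith_indicator_of_eq_zero_frontier (U := U) convex_univ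
    (hC.mono Set.inter_subset_right) fun z hz => Set.indicator_apply_eq_zero.2 fun _ => hzero z hz
  rw [Set.indicator_indicator, Set.inter_self] at hglobal
  exact ⟨C, lipschitzOnWith_univ.1 hglobal⟩

theorem hasFDerivAt_indicator_of_eq_zero [NormedSpace ℝ F] {x : E} (hx : g x = 0)
    (hg : HasFDerivAt g (0 : E →L[ℝ] F) x) : HasFDerivAt (U.indicator g) (0 : E →L[ℝ] F) x := by
  have hx' : U.indicator g x = 0 := Set.indicator_apply_eq_zero.2 fun _ => hx
  rw [hasFDerivAt_iff_isLittleO] at hg ⊢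
  simp only [hx, hx', sub_zero, zero_apply] at hg ⊢
  exact (Asymptotics.isBigO_of_le _ fun y => norm_indicator_le_norm_self g y).trans_isLittleO hg

end Indicator

section Stokes

variable {E : Type*} [NormedAddCommGroup E] [NormedSpace ℝ E] [FiniteDimensional ℝ E]
  [MeasurableSpace E] [BorelSpace E] (μ : Measure E) [μ.IsAddHaarMeasure]

theorem ae_fderiv_eq_zero_of_eq_zero {s : Set E} (hs : MeasurableSet s) {g : E → ℝ}
    (hg : ∀ x ∈ s, DifferentiableAt ℝ g x) (hzero : ∀ x ∈ s, g x = 0) :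
    ∀ᵐ x ∂μ.restrict s, fderiv ℝ g x = 0 := by
  rcases subsingleton_or_nontrivial E with hE | hE
  · exact Eventually.of_forall fun x => Subsingleton.elim _ _
  obtain ⟨e, he⟩ := exists_ne (0 : E)
  -- `norm_fderiv_sub_le` is stated for self-maps of `E`, so let `g` take its values along `e`.
  have happrox : ApproximatesLinearOn (fun x => g x • e) (0 : E →L[ℝ] E) s 0 := by
    intro x hx y hy
    simp [hzero x hx, hzero y hy]
  filter_upwards [happrox.norm_fderiv_sub_le μ hs (fun x => (fderiv ℝ g x).smulRight e)
    fun x hx => ((hg x hx).hasFDerivAt.smul_const e).hasFDerivWithinAt] with x hx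
  simpa [he] using hx

theorem integral_lineDeriv_eq_zero {g : E → ℝ} {C : NNReal} (hg : LipschitzWith C g)
    (hsupp : HasCompactSupport g) (v : E) : ∫ x, lineDeriv ℝ g x v ∂μ = 0 := by
  have hparts := LipschitzWith.integral_lineDeriv_mul_eq (μ := μ)
    (LipschitzWith.const (1 : ℝ)) hg hsupp (-v)
  simpa [lineDeriv] using hparts.symm

variable {U : Set E}

theorem ae_hasFDerivAt_indicator_of_eq_zero_frontier (hU : IsOpen U) {g : E → ℝ}
    (hg : ∀ z ∈ closure U, DifferentiableAt ℝ g z) (hzero : ∀ z ∈ frontier U, g z = 0) :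
    ∀ᵐ x ∂μ, HasFDerivAt (U.indicator g) (U.indicator (fderiv ℝ g) x) x := by
  have hfront := ae_fderiv_eq_zero_of_eq_zero μ isClosed_frontier.measurableSet
    (fun x hx => hg x (frontier_subset_closure hx)) hzero
  filter_upwards [(ae_restrict_iff' isClosed_frontier.measurableSet).1 hfront] with x hx
  by_cases hxU : x ∈ U
  · rw [Set.indicator_of_mem hxU]
    exact (hg x (subset_closure hxU)).hasFDerivAt.congr_of_eventuallyEq
      (eventuallyEq_of_mem (hU.mem_nhds hxU) fun w hw => Set.indicator_of_mem hw g)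
  rw [Set.indicator_of_notMem hxU]
  by_cases hxc : x ∈ closure U
  · have hxf : x ∈ frontier U := ⟨hxc, by rwa [hU.interior_eq]⟩
    refine hasFDerivAt_indicator_of_eq_zero (hzero x hxf) ?_
    rw [← hx hxf]
    exact (hg x hxc).hasFDerivAt
  · exact (hasFDerivAt_const (0 : ℝ) x).congr_of_eventuallyEq
      (eventuallyEq_of_mem (isClosed_closure.isOpen_compl.mem_nhds hxc) fun w hw =>
        Set.indicator_of_notMem (fun hwU => hw (subset_closure hwU)) g)

theorem setIntegral_fderiv_apply_eq_zero_of_real (hU : IsOpen U) (hUb : IsBounded U)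
    {g : E → ℝ} (hg : ∀ z ∈ closure U, ContDiffAt ℝ 1 g z) (hzero : ∀ z ∈ frontier U, g z = 0)
    (v : E) :
    ∫ x in U, fderiv ℝ g x v ∂μ = 0 := by
  obtain ⟨C, hC⟩ :=
    exists_lipschitzWith_indicator_of_eq_zero_frontier hUb.isCompact_closure hg hzero
  have hsupp : HasCompactSupport (U.indicator g) :=
    HasCompactSupport.intro hUb.isCompact_closure fun z hz =>
      Set.indicator_of_notMem (fun h => hz (subset_closure h)) g
  rw [← integral_indicator hU.measurableSet, ← integral_lineDeriv_eq_zero μ hC hsupp v]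
  refine integral_congr_ae ?_
  filter_upwards [ae_hasFDerivAt_indicator_of_eq_zero_frontier μ hU
    (fun z hz => (hg z hz).differentiableAt one_ne_zero) hzero] with x hx
  rw [(hx.hasLineDerivAt v).lineDeriv]
  by_cases hxU : x ∈ U <;> simp [hxU]

variable {F : Type*} [NormedAddCommGroup F] [NormedSpace ℝ F]

theorem integrableOn_fderiv_apply (hUb : IsBounded U) {g : E → F}
    (hg : ∀ z ∈ closure U, ContDiffAt ℝ 1 g z) (v : E) :
    IntegrableOn (fun x => fderiv ℝ g x v) U μ := by
  have hcont : ContinuousOn (fun x => fderiv ℝ g x v) (closure U) := fun z hz =>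
    (((hg z hz).fderiv_right (m := 0) le_rfl).continuousAt.clm_apply
      continuousAt_const).continuousWithinAt
  exact (hcont.integrableOn_compact hUb.isCompact_closure).mono_set subset_closure

theorem setIntegral_fderiv_apply_eq_zero [CompleteSpace F] (hU : IsOpen U) (hUb : IsBounded U)
    {g : E → F} (hg : ∀ z ∈ closure U, ContDiffAt ℝ 1 g z) (hzero : ∀ z ∈ frontier U, g z = 0)
    (v : E) :
    ∫ x in U, fderiv ℝ g x v ∂μ = 0 := by
  refine SeparatingDual.eq_zero_of_forall_dual_eq_zero (R := ℝ) fun A => ?_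
  rw [← A.integral_comp_comm (integrableOn_fderiv_apply μ hUb hg v),
    ← setIntegral_fderiv_apply_eq_zero_of_real μ hU hUb (g := A ∘ g)
      (fun z hz => A.contDiff.contDiffAt.comp z (hg z hz))
      (fun z hz => by simp [hzero z hz]) v]
  refine setIntegral_congr_fun hU.measurableSet fun x hx => ?_
  have hgx := (hg x (subset_closure hx)).differentiableAt one_ne_zero
  simp [fderiv_comp x A.differentiableAt hgx]

end Stokes

section Wirtinger

variable {E : Type*} [NormedAddCommGroup E] [NormedSpace ℂ E]

/-- The Wirtinger derivative `∂f/∂z̄ = (∂f/∂x + i ∂f/∂y) / 2`, the density in Green's formula for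
`f dz`. Its value is `0` where `f` is not real differentiable. -/
noncomputable def dbar (f : ℂ → E) (z : ℂ) : E :=
  (2⁻¹ : ℂ) • (fderiv ℝ f z 1 + I • fderiv ℝ f z I)

theorem dbar_eq_zero {f : ℂ → E} {z : ℂ} (hf : DifferentiableAt ℂ f z) : dbar f z = 0 := by
  have hI : fderiv ℂ f z I = I • fderiv ℂ f z 1 := by
    rw [← map_smul, smul_eq_mul, mul_one]
  rw [dbar, hf.fderiv_restrictScalars ℝ]
  simp [hI, smul_smul]

theorem dbar_conj (z : ℂ) : dbar (starRingEnd ℂ) z = 1 := by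
  have hconj : fderiv ℝ (starRingEnd ℂ) z = conjCLE := conjCLE.fderiv
  simp only [dbar, hconj, ContinuousLinearEquiv.coe_coe, ContinuousAlgEquiv.coeCLE_apply,
    conjCAE_apply, map_one, conj_I, smul_eq_mul, mul_neg, I_mul_I, neg_neg]
  norm_num

theorem dbar_sub {f g : ℂ → E} {z : ℂ} (hf : DifferentiableAt ℝ f z) (hg : DifferentiableAt ℝ g z) :
    dbar (f - g) z = dbar f z - dbar g z := by
  simp only [dbar, fderiv_sub hf hg, sub_apply]
  module

theorem dbar_smul_of_differentiableAt {c : ℂ → ℂ} {f : ℂ → E} {z : ℂ}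
    (hc : DifferentiableAt ℝ c z) (hf : DifferentiableAt ℂ f z) :
    dbar (fun w => c w • f w) z = dbar c z • f z := by
  have hfz := dbar_eq_zero hf
  simp only [dbar, fderiv_fun_smul hc (hf.restrictScalars ℝ)] at hfz ⊢
  simp only [add_apply, smul_apply, ContinuousLinearMap.smulRight_apply, smul_add, smul_eq_mul]
  linear_combination (norm := module) c z • hfz

theorem dbar_congr {f g : ℂ → E} {z : ℂ} (h : f =ᶠ[𝓝 z] g) : dbar f z = dbar g z := by
  rw [dbar, dbar, h.fderiv_eq]

theorem continuousAt_dbar {f : ℂ → E} {z : ℂ} (hf : ContDiffAt ℝ 1 f z) :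
    ContinuousAt (dbar f) z := by
  have hfderiv := (hf.fderiv_right (m := 0) le_rfl).continuousAt
  unfold dbar
  fun_prop

theorem fderiv_apply_add_I_smul_fderiv_apply_mul_I (f : ℂ → E) (z e : ℂ) :
    fderiv ℝ f z e + I • fderiv ℝ f z (e * I) = (2 * starRingEnd ℂ e) • dbar f z := by
  have hre_im (v : ℂ) :
      fderiv ℝ f z v = (v.re : ℂ) • fderiv ℝ f z 1 + (v.im : ℂ) • fderiv ℝ f z I := by
    simp only [coe_smul]
    rw [← map_smul, ← map_smul, ← map_add, real_smul, real_smul, mul_one, re_add_im]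
  have hconj : starRingEnd ℂ e = e.re - e.im * I := by apply Complex.ext <;> simp
  rw [hre_im e, hre_im (e * I), hconj, dbar, mul_I_re, mul_I_im]
  push_cast
  match_scalars
  · ring
  · linear_combination (e.im : ℂ) * I_mul_I

end Wirtinger

section PolarCoordinates

variable {F : Type*} [NormedAddCommGroup F] [NormedSpace ℝ F]

theorem differentiableAt_circleMap_prod (a : ℂ) (p : ℝ × ℝ) :
    DifferentiableAt ℝ (fun q : ℝ × ℝ => circleMap a q.1 q.2) p := by
  unfold circleMap
  fun_prop

open Metric in
theorem setIntegral_closedBall_eq_setIntegral_circleMap (g : ℂ → F) (a : ℂ) (R : ℝ) :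
    ∫ z in closedBall a R, g z =
      ∫ p in Set.Ioc 0 R ×ˢ Set.Ioo (-Real.pi) Real.pi, p.1 • g (circleMap a p.1 p.2) := by
  have hpolar (p : ℝ × ℝ) : Complex.polarCoord.symm p + a = circleMap a p.1 p.2 := by
    rw [Complex.polarCoord_symm_apply, circleMap, exp_mul_I, add_comm, ofReal_cos, ofReal_sin]
  have hmem {p : ℝ × ℝ} (hp : 0 < p.1) : circleMap a p.1 p.2 ∈ closedBall a R ↔ p.1 ≤ R := by
    simp [mem_closedBall, dist_eq_norm, circleMap, abs_of_pos hp]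
  rw [← integral_indicator isClosed_closedBall.measurableSet, ← integral_add_right_eq_self _ a,
    ← Complex.integral_comp_polarCoord_symm]
  simp only [hpolar]
  rw [setIntegral_eq_of_subset_of_forall_sdiff_eq_zero
    (s := Set.Ioc 0 R ×ˢ Set.Ioo (-Real.pi) Real.pi) polarCoord.open_target.measurableSet
    (Set.prod_mono Set.Ioc_subset_Ioi_self subset_rfl)]
  · refine setIntegral_congr_fun (measurableSet_Ioc.prod measurableSet_Ioo) fun p hp => ?_
    simp only [Set.indicator_of_mem ((hmem hp.1.1).2 hp.1.2)]
  · rintro p ⟨hp, hpR⟩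
    rw [Set.indicator_of_notMem, smul_zero]
    exact fun h => hpR ⟨⟨hp.1, (hmem hp.1).1 h⟩, hp.2⟩

open Metric in
theorem circleMap_mem_closedBall_of_mem_Icc (a : ℂ) {R r : ℝ} (hr : r ∈ Set.Icc 0 R) (t : ℝ) :
    circleMap a r t ∈ closedBall a R :=
  closedBall_subset_closedBall hr.2 (circleMap_mem_closedBall a hr.1 t)

open Metric in
theorem continuousOn_smul_comp_circleMap {g : ℂ → F} {a : ℂ} {R : ℝ}
    (hg : ContinuousOn g (closedBall a R)) (T : Set ℝ) :
    ContinuousOn (fun p : ℝ × ℝ => p.1 • g (circleMap a p.1 p.2)) (Set.Icc 0 R ×ˢ T) :=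
  continuousOn_fst.smul (hg.comp
    (fun p _ => (differentiableAt_circleMap_prod a p).continuousAt.continuousWithinAt)
    fun p hp => circleMap_mem_closedBall_of_mem_Icc a hp.1 p.2)

open Metric in
theorem setIntegral_closedBall_eq_intervalIntegral_circleMap {g : ℂ → F} {a : ℂ} {R : ℝ}
    (hR : 0 ≤ R) (hg : ContinuousOn g (closedBall a R)) :
    ∫ z in closedBall a R, g z =
      ∫ r in 0..R, ∫ t in 0..2 * Real.pi, r • g (circleMap a r t) := by
  have hint : IntegrableOn (fun p : ℝ × ℝ => p.1 • g (circleMap a p.1 p.2))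
      (Set.Ioc 0 R ×ˢ Set.Ioo (-Real.pi) Real.pi) :=
    ((continuousOn_smul_comp_circleMap hg (Set.Icc (-Real.pi) Real.pi)).integrableOn_compact
      (isCompact_Icc.prod isCompact_Icc)).mono_set
      (Set.prod_mono Set.Ioc_subset_Icc_self Set.Ioo_subset_Icc_self)
  rw [setIntegral_closedBall_eq_setIntegral_circleMap, Measure.volume_eq_prod,
    setIntegral_prod _ hint, intervalIntegral.integral_of_le hR]
  refine setIntegral_congr_fun measurableSet_Ioc fun r _ => ?_
  have hper : Function.Periodic (fun t => r • g (circleMap a r t)) (2 * Real.pi) :=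
    fun t => by simp only [periodic_circleMap a r t]
  have hshift := hper.intervalIntegral_add_eq (-Real.pi) 0
  rw [show -Real.pi + 2 * Real.pi = Real.pi by ring, zero_add] at hshift
  simpa only [← integral_Ioc_eq_integral_Ioo,
    ← intervalIntegral.integral_of_le (neg_le_self Real.pi_pos.le)] using hshift

theorem hasDerivAt_circleMap_radius (a : ℂ) (r t : ℝ) :
    HasDerivAt (fun ρ : ℝ => circleMap a ρ t) (circleMap 0 1 t) r := by
  simpa [circleMap] using ((hasDerivAt_id r).ofReal_comp.mul_const (cexp (t * I))).const_add a

theorem fderiv_apply_fst {h : ℝ × ℝ → F} {r t : ℝ} {h' : F} (hh : DifferentiableAt ℝ h (r, t))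
    (hh' : HasDerivAt (fun ρ => h (ρ, t)) h' r) : fderiv ℝ h (r, t) (1, 0) = h' :=
  (hh.hasFDerivAt.comp_hasDerivAt r ((hasDerivAt_id r).prodMk (hasDerivAt_const r t))).unique hh'

theorem fderiv_apply_snd {h : ℝ × ℝ → F} {r t : ℝ} {h' : F} (hh : DifferentiableAt ℝ h (r, t))
    (hh' : HasDerivAt (fun θ => h (r, θ)) h' t) : fderiv ℝ h (r, t) (0, 1) = h' :=
  (hh.hasFDerivAt.comp_hasDerivAt t ((hasDerivAt_const t r).prodMk (hasDerivAt_id t))).unique hh'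

theorem integral2_fderiv_sub_fderiv {A B : ℝ × ℝ → F} {a₁ a₂ b₁ b₂ : ℝ}
    (hA : ∀ p ∈ Set.uIcc a₁ b₁ ×ˢ Set.uIcc a₂ b₂, DifferentiableAt ℝ A p)
    (hB : ∀ p ∈ Set.uIcc a₁ b₁ ×ˢ Set.uIcc a₂ b₂, DifferentiableAt ℝ B p)
    (hint : IntegrableOn (fun p => fderiv ℝ B p (1, 0) - fderiv ℝ A p (0, 1))
      (Set.uIcc a₁ b₁ ×ˢ Set.uIcc a₂ b₂)) :
    ∫ x in a₁..b₁, ∫ y in a₂..b₂, fderiv ℝ B (x, y) (1, 0) - fderiv ℝ A (x, y) (0, 1) =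
      (∫ y in a₂..b₂, B (b₁, y)) - (∫ y in a₂..b₂, B (a₁, y)) +
        ((∫ x in a₁..b₁, A (x, a₂)) - ∫ x in a₁..b₁, A (x, b₂)) := by
  have hsub : Set.Ioo (min a₁ b₁) (max a₁ b₁) ×ˢ Set.Ioo (min a₂ b₂) (max a₂ b₂) ⊆
      Set.uIcc a₁ b₁ ×ˢ Set.uIcc a₂ b₂ :=
    Set.prod_mono Set.Ioo_subset_Icc_self Set.Ioo_subset_Icc_self
  have hdiv := integral2_divergence_prod_of_hasFDerivAt B (-A) (fderiv ℝ B)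
    (fun p => -fderiv ℝ A p) a₁ a₂ b₁ b₂
    (fun p hp => (hB p hp).continuousAt.continuousWithinAt)
    (fun p hp => (hA p hp).neg.continuousAt.continuousWithinAt)
    (fun p hp => (hB p (hsub hp)).hasFDerivAt)
    (fun p hp => (hA p (hsub hp)).hasFDerivAt.neg)
    (by simpa only [neg_apply, ← sub_eq_add_neg] using hint)
  simp only [neg_apply, Pi.neg_apply, ← sub_eq_add_neg, intervalIntegral.integral_neg] at hdiv
  rw [hdiv]
  abel

end PolarCoordinates

section GreenDisk

variable {E : Type*} [NormedAddCommGroup E] [NormedSpace ℂ E] {f : ℂ → E} {a : ℂ}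

/-- The `dr`-coefficient of the pullback of `f dz` under `(r, t) ↦ a + r e^{it}`. Together with
`polarAngularCoeff` it is the field to which Green's formula on a rectangle is applied. -/
noncomputable def polarRadialCoeff (f : ℂ → E) (a : ℂ) (p : ℝ × ℝ) : E :=
  circleMap 0 1 p.2 • f (circleMap a p.1 p.2)

/-- The `dt`-coefficient of the pullback of `f dz` under `(r, t) ↦ a + r e^{it}`; at `r = R` it is
the integrand defining `∮ z in C(a, R), f z`. -/
noncomputable def polarAngularCoeff (f : ℂ → E) (a : ℂ) (p : ℝ × ℝ) : E :=
  (circleMap 0 p.1 p.2 * I) • f (circleMap a p.1 p.2)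

theorem differentiableAt_polarRadialCoeff {p : ℝ × ℝ}
    (hf : DifferentiableAt ℝ f (circleMap a p.1 p.2)) :
    DifferentiableAt ℝ (polarRadialCoeff f a) p :=
  ((differentiable_circleMap 0 1).differentiableAt.comp p differentiableAt_snd).smul
    (hf.comp p (differentiableAt_circleMap_prod a p))

theorem differentiableAt_polarAngularCoeff {p : ℝ × ℝ}
    (hf : DifferentiableAt ℝ f (circleMap a p.1 p.2)) :
    DifferentiableAt ℝ (polarAngularCoeff f a) p :=
  ((differentiableAt_circleMap_prod 0 p).mul_const I).smul
    (hf.comp p (differentiableAt_circleMap_prod a p))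

theorem fderiv_polarAngularCoeff_apply {r t : ℝ} (hf : DifferentiableAt ℝ f (circleMap a r t)) :
    fderiv ℝ (polarAngularCoeff f a) (r, t) (1, 0) =
      (circleMap 0 r t * I) • fderiv ℝ f (circleMap a r t) (circleMap 0 1 t) +
        (circleMap 0 1 t * I) • f (circleMap a r t) :=
  fderiv_apply_fst (differentiableAt_polarAngularCoeff hf)
    (((hasDerivAt_circleMap_radius 0 r t).mul_const I).smul
      (hf.hasFDerivAt.comp_hasDerivAt r (hasDerivAt_circleMap_radius a r t)))

theorem fderiv_polarRadialCoeff_apply {r t : ℝ} (hf : DifferentiableAt ℝ f (circleMap a r t)) :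
    fderiv ℝ (polarRadialCoeff f a) (r, t) (0, 1) =
      circleMap 0 1 t • fderiv ℝ f (circleMap a r t) (circleMap 0 r t * I) +
        (circleMap 0 1 t * I) • f (circleMap a r t) :=
  fderiv_apply_snd (differentiableAt_polarRadialCoeff hf)
    ((hasDerivAt_circleMap 0 1 t).smul
      (hf.hasFDerivAt.comp_hasDerivAt t (hasDerivAt_circleMap a r t)))

theorem fderiv_polarAngularCoeff_sub_fderiv_polarRadialCoeff {p : ℝ × ℝ}
    (hf : DifferentiableAt ℝ f (circleMap a p.1 p.2)) :
    fderiv ℝ (polarAngularCoeff f a) p (1, 0) - fderiv ℝ (polarRadialCoeff f a) p (0, 1) =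
      (2 * I) • p.1 • dbar f (circleMap a p.1 p.2) := by
  obtain ⟨r, t⟩ := p
  rw [fderiv_polarAngularCoeff_apply hf, fderiv_polarRadialCoeff_apply hf]
  set e := circleMap 0 1 t with he
  have hr : circleMap 0 r t = r * e := by simp [he, circleMap]
  have hunit : e * starRingEnd ℂ e = 1 := by
    rw [mul_conj, normSq_eq_norm_sq]
    simp [he, circleMap]
  have hreal : fderiv ℝ f (circleMap a r t) (r * e * I) =
      (r : ℂ) • fderiv ℝ f (circleMap a r t) (e * I) := by
    rw [mul_assoc, ← real_smul, map_smul, coe_smul]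
  have hframe := fderiv_apply_add_I_smul_fderiv_apply_mul_I f (circleMap a r t) e
  rw [hr, hreal, ← coe_smul]
  calc _ = (r * e * I) • (fderiv ℝ f (circleMap a r t) e +
          I • fderiv ℝ f (circleMap a r t) (e * I)) := by
        match_scalars
        · ring
        · ring
        · linear_combination (-(r * e) : ℂ) * I_mul_I
    _ = (2 * I) • (r : ℂ) • dbar f (circleMap a r t) := by
        rw [hframe, smul_smul, smul_smul]
        congr 1
        linear_combination (2 * r * I) * hunit

theorem circleIntegral_eq_integral_polarAngularCoeff (f : ℂ → E) (a : ℂ) (R : ℝ) :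
    ∮ z in C(a, R), f z = ∫ t in 0..2 * Real.pi, polarAngularCoeff f a (R, t) := by
  simp only [circleIntegral, deriv_circleMap, polarAngularCoeff]

open Metric in
theorem setIntegral_closedBall_dbar {R : ℝ} (hR : 0 ≤ R)
    (hf : ∀ z ∈ closedBall a R, ContDiffAt ℝ 1 f z) :
    ∫ z in closedBall a R, dbar f z = (2 * I)⁻¹ • ∮ z in C(a, R), f z := by
  have hdiff : ∀ p ∈ Set.uIcc 0 R ×ˢ Set.uIcc 0 (2 * Real.pi),
      DifferentiableAt ℝ f (circleMap a p.1 p.2) := fun p hp =>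
    (hf _ (circleMap_mem_closedBall_of_mem_Icc a (Set.uIcc_of_le hR ▸ hp.1) p.2)).differentiableAt
      one_ne_zero
  have hdbar : ContinuousOn (dbar f) (closedBall a R) :=
    fun z hz => (continuousAt_dbar (hf z hz)).continuousWithinAt
  have hcurl : Set.EqOn
      (fun p => fderiv ℝ (polarAngularCoeff f a) p (1, 0) -
        fderiv ℝ (polarRadialCoeff f a) p (0, 1))
      (fun p => (2 * I) • p.1 • dbar f (circleMap a p.1 p.2))
      (Set.uIcc 0 R ×ˢ Set.uIcc 0 (2 * Real.pi)) := fun p hp =>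
    fderiv_polarAngularCoeff_sub_fderiv_polarRadialCoeff (hdiff p hp)
  have hcurl_cont : ContinuousOn (fun p : ℝ × ℝ => (2 * I) • p.1 • dbar f (circleMap a p.1 p.2))
      (Set.uIcc 0 R ×ˢ Set.uIcc 0 (2 * Real.pi)) := by
    rw [Set.uIcc_of_le hR]
    exact (continuousOn_smul_comp_circleMap hdbar _).const_smul _
  have hgreen := integral2_fderiv_sub_fderiv
    (fun p hp => differentiableAt_polarRadialCoeff (hdiff p hp))
    (fun p hp => differentiableAt_polarAngularCoeff (hdiff p hp))
    ((hcurl_cont.congr hcurl).integrableOn_compact (isCompact_uIcc.prod isCompact_uIcc))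
  have hcentre : ∀ t, polarAngularCoeff f a (0, t) = 0 := by simp [polarAngularCoeff]
  have hperiod : ∀ r, polarRadialCoeff f a (r, 2 * Real.pi) = polarRadialCoeff f a (r, 0) := by
    intro r
    simp [polarRadialCoeff, circleMap]
  rw [eq_inv_smul_iff₀ (by simp), circleIntegral_eq_integral_polarAngularCoeff,
    setIntegral_closedBall_eq_intervalIntegral_circleMap hR hdbar]
  simp only [hcentre, hperiod, intervalIntegral.integral_zero, sub_zero, sub_self,
    add_zero] at hgreen
  rw [← hgreen, ← intervalIntegral.integral_smul]
  refine intervalIntegral.integral_congr fun r hr => ?_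
  simp only [← intervalIntegral.integral_smul]
  exact intervalIntegral.integral_congr fun t ht => (hcurl (x := (r, t)) ⟨hr, ht⟩).symm

end GreenDisk

section CauchyGreen

variable {E : Type*} [NormedAddCommGroup E] [NormedSpace ℂ E] {U : Set ℂ}

theorem integrableOn_dbar (hUb : IsBounded U) {g : ℂ → E}
    (hg : ∀ z ∈ closure U, ContDiffAt ℝ 1 g z) : IntegrableOn (dbar g) U :=
  ((integrableOn_fderiv_apply volume hUb hg 1).add
    ((integrableOn_fderiv_apply volume hUb hg I).smul I)).smul (2⁻¹ : ℂ)

theorem setIntegral_dbar_eq_zero [CompleteSpace E] (hU : IsOpen U) (hUb : IsBounded U)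
    {g : ℂ → E} (hg : ∀ z ∈ closure U, ContDiffAt ℝ 1 g z) (hzero : ∀ z ∈ frontier U, g z = 0) :
    ∫ z in U, dbar g z = 0 := by
  have hI : IntegrableOn (fun z => I • fderiv ℝ g z I) U :=
    (integrableOn_fderiv_apply volume hUb hg I).smul I
  simp only [dbar]
  rw [integral_smul, integral_add (integrableOn_fderiv_apply volume hUb hg 1) hI, integral_smul,
    setIntegral_fderiv_apply_eq_zero volume hU hUb hg hzero,
    setIntegral_fderiv_apply_eq_zero volume hU hUb hg hzero, smul_zero, add_zero, smul_zero]

theorem setIntegral_dbar_congr_frontier [CompleteSpace E] (hU : IsOpen U) (hUb : IsBounded U)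
    {u w : ℂ → E} (hu : ∀ z ∈ closure U, ContDiffAt ℝ 1 u z)
    (hw : ∀ z ∈ closure U, ContDiffAt ℝ 1 w z) (heq : ∀ z ∈ frontier U, u z = w z) :
    ∫ z in U, dbar u z = ∫ z in U, dbar w z := by
  rw [← sub_eq_zero, ← integral_sub (integrableOn_dbar hUb hu) (integrableOn_dbar hUb hw),
    ← setIntegral_dbar_eq_zero hU hUb (g := u - w) (fun z hz => (hu z hz).sub (hw z hz))
      fun z hz => sub_eq_zero.2 (heq z hz)]
  exact setIntegral_congr_fun hU.measurableSet fun z hz =>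
    (dbar_sub ((hu z (subset_closure hz)).differentiableAt one_ne_zero)
      ((hw z (subset_closure hz)).differentiableAt one_ne_zero)).symm

theorem exists_contDiffAt_eventuallyEq {X F : Type*} [NormedAddCommGroup X] [NormedSpace ℝ X]
    [FiniteDimensional ℝ X] [NormedAddCommGroup F] [NormedSpace ℝ F] {n : ℕ∞} {P W K : Set X}
    (hP : IsClosed P) (hW : IsOpen W) (hPW : P ⊆ W) {g : X → F}
    (hg : ∀ x ∈ K \ P, ContDiffAt ℝ n g x) :
    ∃ w : X → F, (∀ x ∈ K, ContDiffAt ℝ n w x) ∧ ∀ x ∉ W, w =ᶠ[𝓝 x] g := by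
  obtain ⟨χ, hχ0, hχ1, -⟩ := exists_contMDiffMap_zero_one_nhds_of_isClosed (n := n)
    (modelWithCornersSelf ℝ X) hP hW.isClosed_compl (Set.disjoint_compl_right_iff_subset.2 hPW)
  refine ⟨fun x => χ x • g x, fun x hx => ?_, fun x hx => ?_⟩
  · by_cases hxP : x ∈ P
    · have hvanish : (fun y => χ y • g y) =ᶠ[𝓝 x] fun _ => 0 := by
        filter_upwards [hχ0.filter_mono (nhds_le_nhdsSet hxP)] with y hy
        rw [hy, zero_smul]
      exact contDiffAt_const.congr_of_eventuallyEq hvanish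
    · exact χ.contMDiff.contDiff.contDiffAt.smul (hg x ⟨hx, hxP⟩)
  · filter_upwards [hχ1.filter_mono (nhds_le_nhdsSet hx)] with y hy
    rw [hy, one_smul]

open Metric Function in
theorem notMem_iUnion_ball_of_mem_sphere {X ι : Type*} [PseudoMetricSpace X] {a : ι → X}
    {ε : ι → ℝ} (hdisj : Pairwise (Disjoint on fun j => closedBall (a j) (ε j))) {j : ι} {x : X}
    (hx : x ∈ sphere (a j) (ε j)) : x ∉ ⋃ k, ball (a k) (ε k) := by
  rw [Set.mem_iUnion]
  rintro ⟨k, hk⟩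
  rcases eq_or_ne j k with rfl | hjk
  · exact sphere_disjoint_ball.le_bot ⟨hx, hk⟩
  · exact (hdisj hjk).le_bot ⟨sphere_subset_closedBall hx, ball_subset_closedBall hk⟩

open Metric Function in
theorem setIntegral_iUnion_closedBall_dbar {ι : Type*} [Fintype ι] {a : ι → ℂ} {ε : ι → ℝ}
    (hε : ∀ j, 0 ≤ ε j) (hdisj : Pairwise (Disjoint on fun j => closedBall (a j) (ε j)))
    {w : ℂ → E} (hw : ∀ j, ∀ z ∈ closedBall (a j) (ε j), ContDiffAt ℝ 1 w z) :
    ∫ z in ⋃ j, closedBall (a j) (ε j), dbar w z =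
      ∑ j, (2 * I)⁻¹ • ∮ z in C(a j, ε j), w z := by
  have hint (j : ι) : IntegrableOn (dbar w) (closedBall (a j) (ε j)) :=
    integrableOn_dbar isBounded_closedBall fun z hz =>
      hw j z (isClosed_closedBall.closure_subset hz)
  rw [integral_iUnion_fintype (fun j => isClosed_closedBall.measurableSet) hdisj hint]
  exact Finset.sum_congr rfl fun j _ => setIntegral_closedBall_dbar (hε j) (hw j)

open Metric Function in
theorem setIntegral_dbar_eq_sum_circleIntegral [CompleteSpace E] (hU : IsOpen U)
    (hUb : IsBounded U) {ι : Type*} [Fintype ι] {a : ι → ℂ} {ε : ι → ℝ} (hε : ∀ j, 0 < ε j)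
    (hballs : ∀ j, closedBall (a j) (ε j) ⊆ U)
    (hdisj : Pairwise (Disjoint on fun j => closedBall (a j) (ε j))) {g u : ℂ → E}
    (hg : AnalyticOnNhd ℂ g (closure U \ Set.range a))
    (hu : ∀ z ∈ closure U, ContDiffAt ℝ 1 u z) (heq : ∀ z ∈ frontier U, u z = g z) :
    ∫ z in U, dbar u z = ∑ j, (2 * I)⁻¹ • ∮ z in C(a j, ε j), g z := by
  obtain ⟨w, hw, hwg⟩ := exists_contDiffAt_eventuallyEq (n := 1) (W := ⋃ j, ball (a j) (ε j))
    (Set.finite_range a).isClosed (isOpen_iUnion fun j => isOpen_ball)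
    (Set.range_subset_iff.2 fun j => Set.mem_iUnion_of_mem j (mem_ball_self (hε j)))
    fun z hz => (hg z hz).contDiffAt.restrict_scalars ℝ
  have hdbar : ∀ z ∈ U \ ⋃ j, closedBall (a j) (ε j), dbar w z = 0 := by
    rintro z ⟨hzU, hz⟩
    have hzW : z ∉ ⋃ j, ball (a j) (ε j) :=
      fun h => hz (Set.iUnion_mono (fun j => ball_subset_closedBall) h)
    have hza : z ∉ Set.range a := by
      rintro ⟨j, rfl⟩
      exact hz (Set.mem_iUnion_of_mem j (mem_closedBall_self (hε j).le))
    rw [dbar_congr (hwg z hzW), dbar_eq_zero (hg z ⟨subset_closure hzU, hza⟩).differentiableAt]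
  have hfrontier : ∀ z ∈ frontier U, z ∉ ⋃ j, ball (a j) (ε j) := fun z hz hzW =>
    hU.inter_frontier_eq.subset
      ⟨Set.iUnion_subset (fun j => ball_subset_closedBall.trans (hballs j)) hzW, hz⟩
  calc ∫ z in U, dbar u z = ∫ z in U, dbar w z :=
        setIntegral_dbar_congr_frontier hU hUb hu hw fun z hz => by
          rw [heq z hz, (hwg z (hfrontier z hz)).eq_of_nhds]
    _ = ∫ z in ⋃ j, closedBall (a j) (ε j), dbar w z :=
        setIntegral_eq_of_subset_of_forall_sdiff_eq_zero hU.measurableSet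
          (Set.iUnion_subset hballs) hdbar
    _ = ∑ j, (2 * I)⁻¹ • ∮ z in C(a j, ε j), w z :=
        setIntegral_iUnion_closedBall_dbar (fun j => (hε j).le) hdisj fun j z hz =>
          hw z (subset_closure (hballs j hz))
    _ = ∑ j, (2 * I)⁻¹ • ∮ z in C(a j, ε j), g z := by
        refine Finset.sum_congr rfl fun j _ => ?_
        rw [circleIntegral.integral_congr (hε j).le fun z hz =>
          (hwg z (notMem_iUnion_ball_of_mem_sphere hdisj hz)).eq_of_nhds]

end CauchyGreen

theorem quadrature_identity_of_meromorphic_schwarz_general {E : Type*} [NormedAddCommGroup E]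
    [NormedSpace ℂ E] [CompleteSpace E] {Ω : Set ℂ}
    (hΩopen : IsOpen Ω) (hΩbdd : IsBounded Ω) {ι : Type*} [Fintype ι] {a : ι → ℂ} {S : ℂ → ℂ}
    (hS : AnalyticOnNhd ℂ S (closure Ω \ Set.range a))
    (hSval : ∀ z ∈ frontier Ω, S z = (starRingEnd ℂ) z) {f : ℂ → E}
    (hf : AnalyticOnNhd ℂ f (closure Ω)) {ε : ι → ℝ} (hε : ∀ j, 0 < ε j)
    (hballs : ∀ j, Metric.closedBall (a j) (ε j) ⊆ Ω)
    (hdisj : Pairwise (Function.onFun Disjoint fun j => Metric.closedBall (a j) (ε j))) :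
    (1 / (Real.pi : ℂ)) • ∫ z in Ω, f z =
      ∑ j, (1 / (2 * Real.pi * I)) • ∮ z in C(a j, ε j), S z • f z := by
  have hconj : ContDiff ℝ 1 (starRingEnd ℂ) := conjCLE.contDiff
  have hdbar : ∀ z ∈ Ω, dbar (fun w => (starRingEnd ℂ) w • f w) z = f z := fun z hz => by
    rw [dbar_smul_of_differentiableAt (hconj.differentiable one_ne_zero z)
      (hf z (subset_closure hz)).differentiableAt, dbar_conj, one_smul]
  have hcauchyGreen := setIntegral_dbar_eq_sum_circleIntegral hΩopen hΩbdd hε hballs hdisj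
    (hS.smul (hf.mono Set.sdiff_subset))
    (u := fun z => (starRingEnd ℂ) z • f z)
    (fun z hz => hconj.contDiffAt.smul ((hf z hz).contDiffAt.restrict_scalars ℝ))
    fun z hz => by simp only [hSval z hz]
  rw [← setIntegral_congr_fun hΩopen.measurableSet hdbar, hcauchyGreen, Finset.smul_sum]
  refine Finset.sum_congr rfl fun j _ => ?_
  rw [smul_smul]
  congr 1
  field_simp

theorem closure_sdiff_subset_sdiff_union {X : Type*} [TopologicalSpace X] {U V P : Set X}
    (hV : frontier U ⊆ V) : closure U \ P ⊆ U \ P ∪ V := by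
  rintro x ⟨hx, hxP⟩
  rcases (closure_eq_self_union_frontier U).subset hx with hxU | hxU
  exacts [Or.inl ⟨hxU, hxP⟩, Or.inr (hV hxU)]

/-- If the Schwarz function of `Γ` extends meromorphically to `Ω` (with poles
among finitely many points `a j`), then `Ω` is a quadrature domain: for every `f`
holomorphic on a neighborhood of `closure Ω`,
`(1/π) ∫_Ω f dA = Σ_j (1/(2πi)) ∮_{|z−a_j|=ε} f(z) S(z) dz`. -/
theorem quadrature_identity_of_meromorphic_schwarz
    (Ω : Set ℂ) (hΩopen : IsOpen Ω) (hΩbdd : Bornology.IsBounded Ω)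
    (hΩconn : IsConnected Ω) (hΩsc : SimplyConnectedSpace Ω)
    (γ : ℝ → ℂ) (hγan : ∀ t, AnalyticAt ℝ γ t)
    (hγper : Function.Periodic γ (2 * Real.pi))
    (hγ' : ∀ t, deriv γ t ≠ 0)
    (hΓ : frontier Ω = Set.range γ)
    (hwind : ∀ z ∈ Ω,
      (1 / (2 * Real.pi * Complex.I)) *
        (∫ t in (0:ℝ)..(2 * Real.pi), deriv γ t / (γ t - z)) = 1)
    (n : ℕ) (a : Fin n → ℂ) (ha : ∀ j, a j ∈ Ω) (hainj : Function.Injective a)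
    (V : Set ℂ) (hV : IsOpen V) (hΓV : frontier Ω ⊆ V)
    (S : ℂ → ℂ) (hS : DifferentiableOn ℂ S ((Ω \ Set.range a) ∪ V))
    (hSval : ∀ z ∈ frontier Ω, S z = (starRingEnd ℂ) z)
    (O : Set ℂ) (hO : IsOpen O) (hΩO : closure Ω ⊆ O)
    (f : ℂ → ℂ) (hf : DifferentiableOn ℂ f O)
    (ε : ℝ) (hε : 0 < ε)
    (hballs : ∀ j, Metric.closedBall (a j) ε ⊆ Ω \ V)
    (hdisj : ∀ j k, j ≠ k →
      Disjoint (Metric.closedBall (a j) ε) (Metric.closedBall (a k) ε)) :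
    (1 / (Real.pi : ℂ)) * (∫ ζ in Ω, f ζ) =
      ∑ j : Fin n, (1 / (2 * Real.pi * Complex.I)) *
        (∮ z in C(a j, ε), f z * S z) := by
  have hopen : IsOpen (Ω \ Set.range a ∪ V) :=
    (hΩopen.sdiff (Set.finite_range a).isClosed).union hV
  have hgen := quadrature_identity_of_meromorphic_schwarz_general hΩopen hΩbdd
    ((hS.analyticOnNhd hopen).mono (closure_sdiff_subset_sdiff_union hΓV)) hSval
    ((hf.analyticOnNhd hO).mono hΩO) (fun _ => hε) (fun j => (hballs j).trans Set.sdiff_subset)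
    hdisj
  simpa only [smul_eq_mul, mul_comm (S _)] using hgen
end
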